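/- (Intermediate-layer spectral bounds at random initialization.) There exist absolute constants C, c > 0 such that if m ≥ C·n·L·log(n·L), then with probability at least 1 − e^{−c·m/L} over the random matrices A and W_1,…,W_L, for all i ∈ [n] and all 1 ≤ a ≤ b ≤ L: (a) ‖W_b D_{i,b−1} W_{b−1} ⋯ D_{i,a} W_a‖₂ ≤ C·√L; (b) ‖W_b D_{i,b−1} W_{b−1} ⋯ D_{i,a} W_a v‖ ≤ 2‖v‖ for every vector v ∈ ℝ^m with at most m/(C·L·log m) nonzero entries; (c) ‖uᵀ W_b D_{i,b−1} W_{b−1} ⋯ D_{i,a} W_a‖ ≤ C·‖u‖ for every vector u ∈ ℝ^m with at most m/(C·L·log m) nonzero entries. -/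

import Mathlib

/-!
Fix an input. Conditionally on the earlier layers, `W_ℓ` is a fresh Gaussian matrix, and its sign
symmetry makes every ReLU gate a fair coin that is independent of the size of the gated entry. The
factor `1 / 2` of the gate cancels the variance `2 / m`, so one layer multiplies the `κ`-th moment
of `‖D_ℓ W_ℓ ⋯ W_a v‖²` by at most `exp (6 κ² / m)`. This stays `exp (O(κ))` over `L` layers for
`κ` of order `m / L`, and Markov's inequality yields `‖W_b ⋯ W_a v‖² ≤ 3` and
`(u · W_b ⋯ W_a v)² ≤ 1 / L` for fixed unit vectors, up to probability `exp (-Ω(m / L))`.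

Sparse vectors, and vectors supported on one of `O(L)` blocks of about `m / L` coordinates, have
nets of size `exp (O(m / L))`, so a union bound controls all of them. An arbitrary vector is a sum
of its `O(L)` blocks, and Cauchy–Schwarz over the blocks costs the factor `√L`.
-/

open MeasureTheory ProbabilityTheory

noncomputable section

namespace DNNPaper

/-! ### Elementary linear algebra on plain function matrices -/

def mulVec {p q : ℕ} (M : Fin p → Fin q → ℝ) (v : Fin q → ℝ) : Fin p → ℝ :=
  fun i => ∑ j, M i j * v j

def mmul {p q r : ℕ} (M : Fin p → Fin q → ℝ) (N : Fin q → Fin r → ℝ) :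
    Fin p → Fin r → ℝ :=
  fun i k => ∑ j, M i j * N j k

def transpose {p q : ℕ} (M : Fin p → Fin q → ℝ) : Fin q → Fin p → ℝ :=
  fun j i => M i j

def dot {p : ℕ} (u v : Fin p → ℝ) : ℝ := ∑ i, u i * v i

def outer {p q : ℕ} (u : Fin p → ℝ) (v : Fin q → ℝ) : Fin p → Fin q → ℝ :=
  fun i j => u i * v j

def idMat (p : ℕ) : Fin p → Fin p → ℝ := fun i j => if i = j then 1 else 0

def diagMat {p : ℕ} (dg : Fin p → ℝ) : Fin p → Fin p → ℝ :=
  fun i j => if i = j then dg i else 0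

def relu {p : ℕ} (v : Fin p → ℝ) : Fin p → ℝ := fun k => max (v k) 0

/-- diagonal entries of the ReLU sign matrix of a pre-activation vector -/
def signOf {p : ℕ} (g : Fin p → ℝ) : Fin p → ℝ := fun k => if 0 ≤ g k then 1 else 0

/-- Euclidean norm -/
def l2 {p : ℕ} (v : Fin p → ℝ) : ℝ := Real.sqrt (∑ k, v k ^ 2)

/-- max-norm -/
def linf {p : ℕ} (v : Fin p → ℝ) : ℝ := ⨆ k, |v k|

/-- number of nonzero entries -/
def l0 {p : ℕ} (v : Fin p → ℝ) : ℕ := (Finset.univ.filter fun k => v k ≠ 0).card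

/-- Frobenius norm -/
def frob {p q : ℕ} (M : Fin p → Fin q → ℝ) : ℝ := Real.sqrt (∑ i, ∑ j, M i j ^ 2)

/-- spectral norm (ℓ₂ operator norm) -/
def spec {p q : ℕ} (M : Fin p → Fin q → ℝ) : ℝ :=
  sSup {r | ∃ v : Fin q → ℝ, l2 v ≤ 1 ∧ r = l2 (mulVec M v)}

/-- trace (Frobenius) inner product -/
def innerF {p q : ℕ} (M N : Fin p → Fin q → ℝ) : ℝ := ∑ i, ∑ j, M i j * N i j

/-- `‖W‖₂ = max_ℓ ‖W_ℓ‖₂` for a tuple of matrices -/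
def tupleSpec {m L : ℕ} (W : Fin L → Fin m → Fin m → ℝ) : ℝ := ⨆ ℓ, spec (W ℓ)

/-! ### The network -/

variable {𝔡 m d L : ℕ}

/-- `Wat W ℓ` is the weight matrix of layer `ℓ ∈ {1,…,L}` (identity outside this range). -/
def Wat (W : Fin L → Fin m → Fin m → ℝ) (ℓ : ℕ) : Fin m → Fin m → ℝ :=
  if h : 1 ≤ ℓ ∧ ℓ ≤ L then W ⟨ℓ - 1, by omega⟩ else idMat m

/-- the forward (post-activation) vectors `h_ℓ`, `ℓ = 0,1,…,L` -/
def hseq (A : Fin m → Fin 𝔡 → ℝ) (W : Fin L → Fin m → Fin m → ℝ) (x : Fin 𝔡 → ℝ) :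
    ℕ → Fin m → ℝ
  | 0 => relu (mulVec A x)
  | ℓ + 1 =>
      if ℓ + 1 ≤ L then relu (mulVec (Wat W (ℓ + 1)) (hseq A W x ℓ)) else hseq A W x ℓ

/-- the pre-activation vectors `g_ℓ`, `ℓ = 0,1,…,L` -/
def gseq (A : Fin m → Fin 𝔡 → ℝ) (W : Fin L → Fin m → Fin m → ℝ) (x : Fin 𝔡 → ℝ) :
    ℕ → Fin m → ℝ
  | 0 => mulVec A x
  | ℓ + 1 => mulVec (Wat W (ℓ + 1)) (hseq A W x ℓ)

/-- `chainProd W Dfun a b = (D_b W_b) (D_{b-1} W_{b-1}) ⋯ (D_a W_a)` where `D_ℓ` is the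
diagonal matrix with entries `Dfun ℓ`; it is the identity when `b < a`, and factors with
index outside `{1,…,L}` are skipped. -/
def chainProd (W : Fin L → Fin m → Fin m → ℝ) (Dfun : ℕ → Fin m → ℝ) (a : ℕ) :
    ℕ → Fin m → Fin m → ℝ
  | 0 => idMat m
  | b + 1 =>
      if a ≤ b + 1 ∧ b + 1 ≤ L then
        mmul (mmul (diagMat (Dfun (b + 1))) (Wat W (b + 1))) (chainProd W Dfun a b)
      else chainProd W Dfun a b

/-- `prodDW A W x a b = D_b W_b D_{b-1} W_{b-1} ⋯ D_a W_a` with the sign matrices of input `x` -/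
def prodDW (A : Fin m → Fin 𝔡 → ℝ) (W : Fin L → Fin m → Fin m → ℝ) (x : Fin 𝔡 → ℝ)
    (a b : ℕ) : Fin m → Fin m → ℝ :=
  chainProd W (fun ℓ => signOf (gseq A W x ℓ)) a b

/-- `Back_ℓ = B D_L W_L ⋯ D_ℓ W_ℓ` (equal to `B` for `ℓ = L+1`) -/
def backMat (B : Fin d → Fin m → ℝ) (A : Fin m → Fin 𝔡 → ℝ)
    (W : Fin L → Fin m → Fin m → ℝ) (x : Fin 𝔡 → ℝ) (ℓ : ℕ) : Fin d → Fin m → ℝ :=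
  mmul B (prodDW A W x ℓ L)

/-- formula gradient w.r.t. `W_ℓ` with an arbitrary (fake) loss vector `v`:
`D_ℓ (Back_{ℓ+1}ᵀ v) h_{ℓ-1}ᵀ` -/
def gradW (B : Fin d → Fin m → ℝ) (A : Fin m → Fin 𝔡 → ℝ)
    (W : Fin L → Fin m → Fin m → ℝ) (x : Fin 𝔡 → ℝ) (v : Fin d → ℝ) (ℓ : ℕ) :
    Fin m → Fin m → ℝ :=
  outer (mulVec (diagMat (signOf (gseq A W x ℓ)))
      (mulVec (transpose (backMat B A W x (ℓ + 1))) v))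
    (hseq A W x (ℓ - 1))

/-- loss vector `B h_L − y` -/
def lossVec (B : Fin d → Fin m → ℝ) (A : Fin m → Fin 𝔡 → ℝ)
    (W : Fin L → Fin m → Fin m → ℝ) (x : Fin 𝔡 → ℝ) (y : Fin d → ℝ) : Fin d → ℝ :=
  fun j => mulVec B (hseq A W x L) j - y j

/-- per-sample ℓ₂ regression loss `F_i` -/
def objFi (B : Fin d → Fin m → ℝ) (A : Fin m → Fin 𝔡 → ℝ)
    (W : Fin L → Fin m → Fin m → ℝ) (x : Fin 𝔡 → ℝ) (y : Fin d → ℝ) : ℝ :=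
  (1 / 2) * l2 (lossVec B A W x y) ^ 2

/-- total objective `F` -/
def objF {n : ℕ} (B : Fin d → Fin m → ℝ) (A : Fin m → Fin 𝔡 → ℝ)
    (W : Fin L → Fin m → Fin m → ℝ) (x : Fin n → Fin 𝔡 → ℝ)
    (y : Fin n → Fin d → ℝ) : ℝ :=
  ∑ i, objFi B A W (x i) (y i)

/-- formula gradient of the total objective w.r.t. `W_ℓ` -/
def gradF {n : ℕ} (B : Fin d → Fin m → ℝ) (A : Fin m → Fin 𝔡 → ℝ)
    (W : Fin L → Fin m → Fin m → ℝ) (x : Fin n → Fin 𝔡 → ℝ)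
    (y : Fin n → Fin d → ℝ) (ℓ : ℕ) : Fin m → Fin m → ℝ :=
  ∑ i, gradW B A W (x i) (lossVec B A W (x i) (y i)) ℓ

/-! ### Random initialization -/

/-- a `p × q` random matrix with i.i.d. `N(0, v)` entries -/
def gaussMat (p q : ℕ) (v : NNReal) : Measure (Fin p → Fin q → ℝ) :=
  Measure.pi fun _ => Measure.pi fun _ => gaussianReal 0 v

/-- joint law of `(A, W)` at random initialization -/
def initAW (𝔡 m L : ℕ) :
    Measure ((Fin m → Fin 𝔡 → ℝ) × (Fin L → Fin m → Fin m → ℝ)) :=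
  (gaussMat m 𝔡 (2 / m)).prod (Measure.pi fun _ : Fin L => gaussMat m m (2 / m))

/-- joint law of `(A, W, B)` at random initialization -/
def initMeasure (𝔡 m d L : ℕ) :
    Measure ((Fin m → Fin 𝔡 → ℝ) ×
      (Fin L → Fin m → Fin m → ℝ) × (Fin d → Fin m → ℝ)) :=
  (gaussMat m 𝔡 (2 / m)).prod
    ((Measure.pi fun _ : Fin L => gaussMat m m (2 / m)).prod (gaussMat d m (1 / d)))

/-! ### Gaussian vectors -/

section GaussianVectors

variable {ι : Type*} [Fintype ι]

instance instIsNegInvariantGaussianReal (v : NNReal) : (gaussianReal 0 v).IsNegInvariant where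
  neg_eq_self := by rw [Measure.neg]; simpa using gaussianReal_map_neg (μ := 0) (v := v)

lemma integral_exp_mul_I_gaussianReal (μ : ℝ) (v : NNReal) (z t : ℝ) :
    ∫ x, Complex.exp ((z * t : ℝ) * (x : ℂ) * Complex.I) ∂gaussianReal μ v
      = Complex.exp (t * (μ * z : ℝ) * Complex.I - (v * ‖z‖₊ ^ 2 : NNReal) * t ^ 2 / 2) := by
  rw [← charFun_apply_real, charFun_gaussianReal]
  congr 1
  push_cast
  rw [← Complex.ofReal_pow ‖z‖, Real.norm_eq_abs, sq_abs]
  push_cast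
  ring

lemma map_sum_mul_pi_gaussianReal (μ : ι → ℝ) (v : ι → NNReal) (z : ι → ℝ) :
    (Measure.pi fun j => gaussianReal (μ j) (v j)).map (fun w => ∑ j, w j * z j)
      = gaussianReal (∑ j, μ j * z j) (∑ j, v j * ‖z j‖₊ ^ 2) := by
  have hmeas : Measurable fun w : ι → ℝ => ∑ j, w j * z j := by fun_prop
  have := Measure.isProbabilityMeasure_map
    (μ := Measure.pi fun j => gaussianReal (μ j) (v j)) hmeas.aemeasurable
  refine Measure.ext_of_charFun (funext fun t => ?_)
  have hexp (w : ι → ℝ) : Complex.exp (t * ((∑ j, w j * z j : ℝ) : ℂ) * Complex.I)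
      = ∏ j, Complex.exp ((z j * t : ℝ) * (w j : ℂ) * Complex.I) := by
    rw [← Complex.exp_sum]
    push_cast
    simp only [Finset.mul_sum, Finset.sum_mul]
    exact congrArg _ (Finset.sum_congr rfl fun j _ => by ring)
  rw [charFun_gaussianReal, charFun_apply_real, integral_map hmeas.aemeasurable (by fun_prop)]
  simp_rw [hexp]
  rw [integral_fintype_prod_eq_prod fun j (x : ℝ) =>
    Complex.exp ((z j * t : ℝ) * (x : ℂ) * Complex.I)]
  simp_rw [integral_exp_mul_I_gaussianReal]
  rw [← Complex.exp_sum]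
  push_cast
  simp only [Finset.sum_sub_distrib, Finset.mul_sum, Finset.sum_mul, Finset.sum_div]

lemma lintegral_exp_mul_sq_gaussianReal (v : NNReal) {τ : ℝ} (h : 2 * τ * v < 1) :
    ∫⁻ x, ENNReal.ofReal (Real.exp (τ * x ^ 2)) ∂gaussianReal 0 v
      = ENNReal.ofReal (√(1 - 2 * τ * v))⁻¹ := by
  rcases eq_or_ne v 0 with rfl | hv
  · rw [gaussianReal_zero_var, lintegral_dirac' _ (by fun_prop)]
    simp
  have : (0 : ℝ) < v := by positivity
  set b : ℝ := 1 / (2 * v) - τ with hb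
  have hbv : 2 * v * b = 1 - 2 * τ * v := by rw [hb]; field_simp
  have hbpos : 0 < b := by
    by_contra hneg
    nlinarith
  have hdensity (x : ℝ) :
      (gaussianPDF 0 v * fun x => ENNReal.ofReal (Real.exp (τ * x ^ 2))) x
        = ENNReal.ofReal ((√(2 * Real.pi * v))⁻¹ * Real.exp (-b * x ^ 2)) := by
    simp only [Pi.mul_apply, gaussianPDF, gaussianPDFReal]
    rw [← ENNReal.ofReal_mul (by positivity), mul_assoc, ← Real.exp_add]
    congr 3
    rw [hb]; field_simp; ring
  rw [gaussianReal_of_var_ne_zero _ hv,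
    lintegral_withDensity_eq_lintegral_mul _ (measurable_gaussianPDF 0 v) (by fun_prop)]
  simp_rw [hdensity]
  rw [← ofReal_integral_eq_lintegral_ofReal
    ((integrable_exp_neg_mul_sq hbpos).const_mul _)
    (Filter.Eventually.of_forall fun x => by positivity),
    integral_const_mul, integral_gaussian, ← hbv, ← Real.sqrt_inv, ← Real.sqrt_inv,
    ← Real.sqrt_mul (by positivity)]
  congr 2
  have := Real.pi_pos
  field_simp

lemma lintegral_exp_mul_sq_sum_mul (v : NNReal) (z : ι → ℝ) {τ : ℝ}
    (h : 2 * τ * (v * ∑ j, z j ^ 2) < 1) :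
    ∫⁻ w, ENNReal.ofReal (Real.exp (τ * (∑ j, w j * z j) ^ 2))
        ∂(Measure.pi fun _ : ι => gaussianReal 0 v)
      = ENNReal.ofReal (√(1 - 2 * τ * (v * ∑ j, z j ^ 2)))⁻¹ := by
  have hvar : ((∑ j, v * ‖z j‖₊ ^ 2 : NNReal) : ℝ) = v * ∑ j, z j ^ 2 := by
    push_cast
    simp only [Real.norm_eq_abs, sq_abs, Finset.mul_sum]
  have hmap := map_sum_mul_pi_gaussianReal (fun _ => 0) (fun _ => v) z
  simp only [zero_mul, Finset.sum_const_zero] at hmap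
  rw [← hvar, ← lintegral_exp_mul_sq_gaussianReal _ (by rwa [hvar]), ← hmap,
    lintegral_map (by fun_prop) (by fun_prop)]

lemma ae_sum_mul_ne_zero {v : NNReal} (hv : v ≠ 0) {z : ι → ℝ} (hz : z ≠ 0) :
    ∀ᵐ w ∂(Measure.pi fun _ : ι => gaussianReal 0 v), ∑ j, w j * z j ≠ 0 := by
  have hvar : ∑ j, v * ‖z j‖₊ ^ 2 ≠ 0 := by
    obtain ⟨j, hj⟩ := Function.ne_iff.1 hz
    exact (Finset.sum_pos' (fun _ _ => zero_le) ⟨j, Finset.mem_univ j, mul_pos hv.pos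
      (pow_pos (nnnorm_pos.2 hj) 2)⟩).ne'
  have := nullSingletonClass_gaussianReal (μ := ∑ j, 0 * z j) hvar
  have hmeas : Measurable fun w : ι → ℝ => ∑ j, w j * z j := by fun_prop
  refine ae_of_ae_map (p := (· ≠ 0)) hmeas.aemeasurable ?_
  rw [map_sum_mul_pi_gaussianReal (fun _ => 0)]
  exact compl_mem_ae_iff.2 (measure_singleton 0)

end GaussianVectors

section Symmetry

variable {E : Type*} [MeasurableSpace E] [InvolutiveNeg E] [MeasurableNeg E]

lemma two_mul_setLIntegral_eq_lintegral_of_even {μ : Measure E} [μ.IsNegInvariant] {s : Set E}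
    (hs : MeasurableSet s) (hsymm : ∀ᵐ w ∂μ, -w ∈ s ↔ w ∉ s) {F : E → ENNReal}
    (hF : ∀ w, F (-w) = F w) :
    2 * ∫⁻ w in s, F w ∂μ = ∫⁻ w, F w ∂μ := by
  have hcompl : ∫⁻ w in s, F w ∂μ = ∫⁻ w in sᶜ, F w ∂μ := by
    rw [← lintegral_indicator hs, ← lintegral_indicator hs.compl,
      ← lintegral_neg_eq_self (s.indicator F)]
    refine lintegral_congr_ae (hsymm.mono fun w hw => ?_)
    by_cases hws : w ∈ s <;> simp [Set.indicator, hw, hF, hws]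
  rw [← lintegral_add_compl F hs (μ := μ), ← hcompl, two_mul]

lemma measure_eq_half_of_neg_mem_iff {μ : Measure E} [IsProbabilityMeasure μ] [μ.IsNegInvariant]
    {s : Set E} (hs : MeasurableSet s) (hsymm : ∀ᵐ w ∂μ, -w ∈ s ↔ w ∉ s) : μ s = 2⁻¹ := by
  have h := two_mul_setLIntegral_eq_lintegral_of_even hs hsymm (F := fun _ => 1) fun _ => rfl
  simp only [lintegral_const, MeasurableSet.univ, Measure.restrict_apply, Set.univ_inter, one_mul,
    measure_univ] at h
  rw [mul_comm] at h
  exact ENNReal.eq_inv_of_mul_eq_one_left h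

lemma lintegral_ite_one_eq_half {μ : Measure E} [IsProbabilityMeasure μ] [μ.IsNegInvariant]
    {s : Set E} [DecidablePred (· ∈ s)] (hs : MeasurableSet s)
    (hsymm : ∀ᵐ w ∂μ, -w ∈ s ↔ w ∉ s) {F : E → ENNReal} (hF : ∀ w, F (-w) = F w) :
    ∫⁻ w, (if w ∈ s then F w else 1) ∂μ = (1 + ∫⁻ w, F w ∂μ) / 2 := by
  have hon : ∫⁻ w in s, (if w ∈ s then F w else 1) ∂μ = ∫⁻ w in s, F w ∂μ :=
    setLIntegral_congr_fun hs fun w hw => if_pos hw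
  have hoff : ∫⁻ w in sᶜ, (if w ∈ s then F w else 1) ∂μ = 2⁻¹ := by
    rw [setLIntegral_congr_fun hs.compl fun w (hw : w ∉ s) => if_neg hw, setLIntegral_const,
      one_mul]
    exact measure_eq_half_of_neg_mem_iff hs.compl (hsymm.mono fun w hw => by simp [hw])
  rw [← lintegral_add_compl _ hs, hon, hoff,
    ← two_mul_setLIntegral_eq_lintegral_of_even hs hsymm hF, add_comm, ENNReal.add_div,
    mul_div_assoc, ENNReal.mul_div_cancel two_ne_zero ENNReal.ofNat_ne_top, one_div]

end Symmetry

/-! ### Matrices acting on vectors -/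

section LinearAlgebra

variable {p q r : ℕ}

lemma l2_eq_norm (v : Fin p → ℝ) : l2 v = ‖WithLp.toLp 2 v‖ := by
  rw [EuclideanSpace.norm_eq]
  simp only [l2, Real.norm_eq_abs, sq_abs]

lemma l2_nonneg (v : Fin p → ℝ) : 0 ≤ l2 v := Real.sqrt_nonneg _

lemma l2_sq (v : Fin p → ℝ) : l2 v ^ 2 = ∑ k, v k ^ 2 :=
  Real.sq_sqrt (Finset.sum_nonneg fun _ _ => sq_nonneg _)

lemma l2_zero : l2 (0 : Fin p → ℝ) = 0 := by simp [l2]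

lemma l2_pos {v : Fin p → ℝ} (hv : v ≠ 0) : 0 < l2 v := by
  rw [l2_eq_norm]
  exact norm_pos_iff.2 fun h => hv ((WithLp.toLp_eq_zero 2).1 h)

lemma mulVec_zero (M : Fin p → Fin q → ℝ) : mulVec M 0 = 0 := by
  ext
  simp [mulVec]

lemma mulVec_mmul (M : Fin p → Fin q → ℝ) (N : Fin q → Fin r → ℝ) (v : Fin r → ℝ) :
    mulVec (mmul M N) v = mulVec M (mulVec N v) := by
  ext i
  simp only [mulVec, mmul, Finset.sum_mul, Finset.mul_sum, mul_assoc]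
  exact Finset.sum_comm

lemma mulVec_idMat (v : Fin p → ℝ) : mulVec (idMat p) v = v := by
  ext i
  simp [mulVec, idMat]

lemma mulVec_diagMat (g v : Fin p → ℝ) : mulVec (diagMat g) v = fun k => g k * v k := by
  ext i
  simp [mulVec, diagMat]

lemma relu_zero : relu (0 : Fin p → ℝ) = 0 := by
  ext
  simp [relu]

lemma relu_eq_zero_iff {v : Fin p → ℝ} : relu v = 0 ↔ ∀ k, v k ≤ 0 := by
  simp [funext_iff, relu]

lemma l2_mulVec_diagMat_signOf_sq (g v : Fin p → ℝ) :
    l2 (mulVec (diagMat (signOf g)) v) ^ 2 = ∑ k, if 0 ≤ g k then v k ^ 2 else 0 := by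
  rw [l2_sq, mulVec_diagMat]
  exact Finset.sum_congr rfl fun k _ => by by_cases hk : 0 ≤ g k <;> simp [signOf, hk]

end LinearAlgebra

/-! ### Moments of one Gaussian layer -/

lemma pow_le_pow_mul_exp {y s : ℝ} (hy : 0 ≤ y) (hs : 0 < s) (κ : ℕ) :
    y ^ κ ≤ s ^ κ * Real.exp (κ * (y / s) - κ) := by
  have hratio : y / s ≤ Real.exp (y / s - 1) := by
    simpa using Real.add_one_le_exp (y / s - 1)
  calc y ^ κ = s ^ κ * (y / s) ^ κ := by rw [← mul_pow, mul_div_cancel₀ _ hs.ne']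
    _ ≤ s ^ κ * Real.exp (y / s - 1) ^ κ := by gcongr
    _ = s ^ κ * Real.exp (κ * (y / s) - κ) := by rw [← Real.exp_nat_mul]; congr 2; ring

lemma inv_sqrt_one_sub_le {t : ℝ} (h0 : 0 ≤ t) (h1 : t ≤ 1 / 16) :
    (√(1 - 4 * t))⁻¹ ≤ 1 + 2 * t + 12 * t ^ 2 := by
  rw [← Real.sqrt_inv, Real.sqrt_le_iff]
  refine ⟨by positivity, ?_⟩
  rw [inv_le_iff_one_le_mul₀ (by linarith)]
  have h3 : t ^ 3 ≤ t ^ 2 / 16 := by nlinarith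
  have h4 : t ^ 4 ≤ t ^ 2 / 256 := by nlinarith
  have h5 : t ^ 5 ≤ t ^ 2 / 4096 := by nlinarith
  nlinarith

section Moments

variable {Ω : Type*} [MeasurableSpace Ω]

lemma lintegral_pow_le_lintegral_exp (μ : Measure Ω) {Y : Ω → ℝ} (hY : ∀ ω, 0 ≤ Y ω) {s : ℝ}
    (hs : 0 < s) (κ : ℕ) :
    ∫⁻ ω, ENNReal.ofReal (Y ω ^ κ) ∂μ
      ≤ ENNReal.ofReal (s ^ κ * Real.exp (-κ))
        * ∫⁻ ω, ENNReal.ofReal (Real.exp (κ * (Y ω / s))) ∂μ := by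
  rw [← lintegral_const_mul' _ _ ENNReal.ofReal_ne_top]
  refine lintegral_mono fun ω => ?_
  rw [← ENNReal.ofReal_mul (by positivity), mul_assoc, ← Real.exp_add, neg_add_eq_sub]
  exact ENNReal.ofReal_le_ofReal (pow_le_pow_mul_exp (hY ω) hs κ)

lemma lintegral_exp_sum_pi {ι : Type*} [Fintype ι] (P : Measure Ω) [IsProbabilityMeasure P]
    {f : Ω → ℝ} (hf : Measurable f) :
    ∫⁻ ω, ENNReal.ofReal (Real.exp (∑ k, f (ω k))) ∂(Measure.pi fun _ : ι => P)
      = (∫⁻ ω, ENNReal.ofReal (Real.exp (f ω)) ∂P) ^ Fintype.card ι := by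
  have hexp : Measurable fun ω => ENNReal.ofReal (Real.exp (f ω)) := by fun_prop
  have hprod (ω : ι → Ω) : ENNReal.ofReal (Real.exp (∑ k, f (ω k)))
      = ∏ k, ENNReal.ofReal (Real.exp (f (ω k))) := by
    rw [Real.exp_sum, ENNReal.ofReal_prod_of_nonneg fun _ _ => (Real.exp_pos _).le]
  have hindep : iIndepFun (fun k (ω : ι → Ω) => ENNReal.ofReal (Real.exp (f (ω k))))
      (Measure.pi fun _ : ι => P) :=
    iIndepFun_pi (X := fun _ ω => ENNReal.ofReal (Real.exp (f ω))) fun _ => hexp.aemeasurable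
  simp_rw [hprod]
  rw [lintegral_prod_eq_prod_lintegral_of_indepFun Finset.univ _ hindep
    fun k => hexp.comp (measurable_pi_apply k)]
  simp_rw [(measurePreserving_eval (fun _ : ι => P) _).lintegral_comp hexp]
  rw [Finset.prod_const, Finset.card_univ]

lemma lintegral_sum_pow_pi_le {ι : Type*} [Fintype ι] (P : Measure Ω) [IsProbabilityMeasure P]
    {f : Ω → ℝ} (hf : Measurable f) (hf0 : ∀ ω, 0 ≤ f ω) {s β : ℝ} (hs : 0 < s) (κ : ℕ)
    (h : ∫⁻ ω, ENNReal.ofReal (Real.exp (κ * (f ω / s))) ∂P ≤ ENNReal.ofReal (Real.exp β)) :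
    ∫⁻ ω, ENNReal.ofReal ((∑ k, f (ω k)) ^ κ) ∂(Measure.pi fun _ : ι => P)
      ≤ ENNReal.ofReal (s ^ κ * Real.exp (Fintype.card ι * β - κ)) := by
  refine (lintegral_pow_le_lintegral_exp _ (fun ω => Finset.sum_nonneg fun k _ => hf0 (ω k)) hs
    κ).trans ?_
  simp_rw [Finset.sum_div, Finset.mul_sum]
  rw [lintegral_exp_sum_pi P (f := fun ω => κ * (f ω / s)) (by fun_prop)]
  calc _ ≤ ENNReal.ofReal (s ^ κ * Real.exp (-κ))
        * ENNReal.ofReal (Real.exp β) ^ Fintype.card ι := by gcongr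
    _ = _ := by
      rw [← ENNReal.ofReal_pow (Real.exp_pos _).le, ← Real.exp_nat_mul,
        ← ENNReal.ofReal_mul (by positivity), mul_assoc, ← Real.exp_add, neg_add_eq_sub]

end Moments

section GaussianMatrix

variable {p q : ℕ}

instance instIsProbabilityMeasureGaussMat (v : NNReal) : IsProbabilityMeasure (gaussMat p q v) := by
  unfold gaussMat
  infer_instance

@[fun_prop]
lemma measurable_mulVec {Ω : Type*} [MeasurableSpace Ω] {M : Ω → Fin p → Fin q → ℝ}
    {z : Ω → Fin q → ℝ} (hM : Measurable M) (hz : Measurable z) :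
    Measurable fun ω => mulVec (M ω) (z ω) := by
  unfold mulVec
  fun_prop

lemma measurableSet_zero_le_sum_mul (h : Fin q → ℝ) :
    MeasurableSet {w : Fin q → ℝ | 0 ≤ ∑ j, w j * h j} :=
  measurableSet_le measurable_const (by fun_prop)

lemma ae_neg_mem_halfspace_iff {v : NNReal} (hv : v ≠ 0) {h : Fin q → ℝ} (hh : h ≠ 0) :
    ∀ᵐ w ∂(Measure.pi fun _ : Fin q => gaussianReal 0 v),
      -w ∈ {w | 0 ≤ ∑ j, w j * h j} ↔ w ∉ {w | 0 ≤ ∑ j, w j * h j} := by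
  filter_upwards [ae_sum_mul_ne_zero hv hh] with w hw
  simp only [Pi.neg_apply, neg_mul, Finset.sum_neg_distrib, not_le,
    Left.nonneg_neg_iff]
  exact ⟨fun hle => hle.lt_of_ne hw, le_of_lt⟩

/- The symmetry `w ↦ -w` fixes `(w · z)²` and exchanges the half-spaces `0 ≤ w · h` and
`0 > w · h`, so the ReLU gate acts as an independent fair coin even though `h` and `z` may be
correlated. -/
lemma lintegral_exp_gated_row {v : NNReal} (hv : v ≠ 0) {h : Fin q → ℝ} (hh : h ≠ 0)
    (z : Fin q → ℝ) {τ : ℝ} (hτ : 2 * τ * (v * l2 z ^ 2) < 1) :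
    ∫⁻ w, ENNReal.ofReal
        (Real.exp (τ * if 0 ≤ ∑ j, w j * h j then (∑ j, w j * z j) ^ 2 else 0))
        ∂(Measure.pi fun _ : Fin q => gaussianReal 0 v)
      = (1 + ENNReal.ofReal (√(1 - 2 * τ * (v * l2 z ^ 2)))⁻¹) / 2 := by
  rw [l2_sq] at hτ ⊢
  rw [← lintegral_exp_mul_sq_sum_mul v z hτ, ← lintegral_ite_one_eq_half
    (measurableSet_zero_le_sum_mul h) (ae_neg_mem_halfspace_iff hv hh) fun w => by
      simp only [Pi.neg_apply, neg_mul, Finset.sum_neg_distrib, neg_sq]]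
  refine lintegral_congr fun w => ?_
  by_cases hw : 0 ≤ ∑ j, w j * h j <;> simp [hw]

lemma half_one_add_ofReal_inv_sqrt_le {t : ℝ} (h0 : 0 ≤ t) (h1 : t ≤ 1 / 16) :
    (1 + ENNReal.ofReal (√(1 - 4 * t))⁻¹) / 2 ≤ ENNReal.ofReal (Real.exp (t + 6 * t ^ 2)) := by
  rw [← ENNReal.ofReal_one, ← ENNReal.ofReal_add zero_le_one (by positivity),
    ← ENNReal.ofReal_ofNat 2, ← ENNReal.ofReal_div_of_pos two_pos]
  refine ENNReal.ofReal_le_ofReal ?_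
  linarith [inv_sqrt_one_sub_le h0 h1, Real.add_one_le_exp (t + 6 * t ^ 2)]

lemma ofReal_inv_sqrt_le_exp {t : ℝ} (h0 : 0 ≤ t) (h1 : t ≤ 1 / 16) :
    ENNReal.ofReal (√(1 - 2 * t))⁻¹ ≤ ENNReal.ofReal (Real.exp (t + 6 * t ^ 2)) := by
  have hsqrt := inv_sqrt_one_sub_le (t := t / 2) (by positivity) (by linarith)
  rw [show 4 * (t / 2) = 2 * t by ring] at hsqrt
  refine ENNReal.ofReal_le_ofReal ?_
  linarith [Real.add_one_le_exp (t + 6 * t ^ 2), sq_nonneg t]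

/- For `t = κ / p`, the row bound `exp (t + 6 t²)` has linear part `exp t`, which over the `p` rows
exactly cancels the recentring `exp (-κ)`. -/
lemma lintegral_sum_rows_pow_le {κ : ℕ} (hp : 0 < p) (v : NNReal) {f : (Fin q → ℝ) → ℝ}
    (hf : Measurable f) (hf0 : ∀ w, 0 ≤ f w) {s : ℝ} (hs : 0 < s)
    (h : ∫⁻ w, ENNReal.ofReal (Real.exp (κ * (f w / s)))
        ∂(Measure.pi fun _ : Fin q => gaussianReal 0 v)
      ≤ ENNReal.ofReal (Real.exp (κ / p + 6 * (κ / p) ^ 2))) :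
    ∫⁻ M, ENNReal.ofReal ((∑ k, f (M k)) ^ κ) ∂gaussMat p q v
      ≤ ENNReal.ofReal (Real.exp (6 * κ ^ 2 / p) * s ^ κ) := by
  refine (lintegral_sum_pow_pi_le _ hf hf0 hs κ h).trans_eq ?_
  rw [mul_comm, Fintype.card_fin]
  congr 3
  field_simp
  ring

lemma div_le_one_sixteenth {κ : ℕ} (hκ : 16 * κ ≤ p) : (κ : ℝ) / p ≤ 1 / 16 := by
  have : 16 * (κ : ℝ) ≤ p := by exact_mod_cast hκ
  exact div_le_of_le_mul₀ (by positivity) (by norm_num) (by linarith)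

lemma lintegral_l2_signOf_mulVec_pow_le {κ : ℕ} (hκ : 16 * κ ≤ p) {h : Fin q → ℝ} (hh : h ≠ 0)
    (z : Fin q → ℝ) :
    ∫⁻ M, ENNReal.ofReal ((l2 (mulVec (diagMat (signOf (mulVec M h))) (mulVec M z)) ^ 2) ^ κ)
        ∂gaussMat p q (2 / p)
      ≤ ENNReal.ofReal (Real.exp (6 * κ ^ 2 / p) * (l2 z ^ 2) ^ κ) := by
  rcases Nat.eq_zero_or_pos κ with rfl | hκ0
  · simp
  rcases eq_or_ne z 0 with rfl | hz
  · simp [mulVec_zero, l2_zero, hκ0.ne']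
  have hp : 0 < p := by omega
  have hz0 := l2_pos hz
  have hscale (y : ℝ) : κ * (y / l2 z ^ 2) = κ / l2 z ^ 2 * y := by ring
  have hτ : 2 * (κ / l2 z ^ 2) * ((2 / p : NNReal) * l2 z ^ 2) = 4 * ((κ : ℝ) / p) := by
    push_cast; field_simp; ring
  have hκp := div_le_one_sixteenth hκ
  simp_rw [l2_mulVec_diagMat_signOf_sq]
  refine lintegral_sum_rows_pow_le
    (f := fun w => if 0 ≤ ∑ j, w j * h j then (∑ j, w j * z j) ^ 2 else 0) hp _
    (Measurable.ite (measurableSet_zero_le_sum_mul h) (by fun_prop) measurable_const)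
    (fun w => by split_ifs <;> positivity) (by positivity) ?_
  simp only [hscale]
  rw [lintegral_exp_gated_row (by positivity) hh z (by rw [hτ]; linarith), hτ]
  exact half_one_add_ofReal_inv_sqrt_le (by positivity) hκp

lemma lintegral_l2_mulVec_pow_le {κ : ℕ} (hκ : 16 * κ ≤ p) (z : Fin q → ℝ) :
    ∫⁻ M, ENNReal.ofReal ((l2 (mulVec M z) ^ 2) ^ κ) ∂gaussMat p q (2 / p)
      ≤ ENNReal.ofReal (Real.exp (6 * κ ^ 2 / p) * (2 * l2 z ^ 2) ^ κ) := by
  rcases Nat.eq_zero_or_pos κ with rfl | hκ0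
  · simp
  rcases eq_or_ne z 0 with rfl | hz
  · simp [mulVec_zero, l2_zero, hκ0.ne']
  have hp : 0 < p := by omega
  have hz0 := l2_pos hz
  have hscale (y : ℝ) : κ * (y / (2 * l2 z ^ 2)) = κ / (2 * l2 z ^ 2) * y := by ring
  have hτ : 2 * (κ / (2 * l2 z ^ 2)) * ((2 / p : NNReal) * ∑ j, z j ^ 2) = 2 * ((κ : ℝ) / p) := by
    rw [← l2_sq]; push_cast; field_simp
  have hκp := div_le_one_sixteenth hκ
  simp_rw [l2_sq (mulVec _ z)]
  refine lintegral_sum_rows_pow_le (f := fun w => (∑ j, w j * z j) ^ 2) hp _ (by fun_prop)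
    (fun w => sq_nonneg _) (by positivity) ?_
  simp only [hscale]
  rw [lintegral_exp_mul_sq_sum_mul _ z (by rw [hτ]; linarith), hτ]
  exact ofReal_inv_sqrt_le_exp (by positivity) hκp

lemma map_mulVec_gaussMat (v : NNReal) (z : Fin q → ℝ) :
    (gaussMat p q v).map (fun M => mulVec M z)
      = Measure.pi fun _ : Fin p => gaussianReal 0 (v * ∑ j, ‖z j‖₊ ^ 2) := by
  have hrow : Measurable fun w : Fin q → ℝ => ∑ j, w j * z j := by fun_prop
  have hlaw := map_sum_mul_pi_gaussianReal (fun _ => 0) (fun _ => v) z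
  simp only [zero_mul, Finset.sum_const_zero, ← Finset.mul_sum] at hlaw
  have : IsProbabilityMeasure ((Measure.pi fun _ : Fin q => gaussianReal 0 v).map
      fun w => ∑ j, w j * z j) := Measure.isProbabilityMeasure_map hrow.aemeasurable
  have hpi := Measure.pi_map_pi (μ := fun _ : Fin p => Measure.pi fun _ : Fin q => gaussianReal 0 v)
    (f := fun _ w => ∑ j, w j * z j) fun _ => hrow.aemeasurable
  rwa [hlaw] at hpi

lemma lintegral_exp_mul_dot_mulVec_sq (v : NNReal) (u : Fin p → ℝ) (z : Fin q → ℝ) {τ : ℝ}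
    (h : 2 * τ * (v * l2 z ^ 2 * l2 u ^ 2) < 1) :
    ∫⁻ M, ENNReal.ofReal (Real.exp (τ * dot u (mulVec M z) ^ 2)) ∂gaussMat p q v
      = ENNReal.ofReal (√(1 - 2 * τ * (v * l2 z ^ 2 * l2 u ^ 2)))⁻¹ := by
  have hvar : ((v * ∑ j, ‖z j‖₊ ^ 2 : NNReal) : ℝ) = v * l2 z ^ 2 := by
    push_cast
    simp only [Real.norm_eq_abs, sq_abs, l2_sq]
  rw [l2_sq u, ← hvar] at h ⊢
  rw [← lintegral_exp_mul_sq_sum_mul _ u h, ← map_mulVec_gaussMat,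
    lintegral_map (by fun_prop) (by fun_prop)]
  simp only [dot, mul_comm]

lemma lintegral_dot_mulVec_pow_le (hp : 0 < p) (κ : ℕ) (u : Fin p → ℝ) (z : Fin q → ℝ) :
    ∫⁻ M, ENNReal.ofReal ((dot u (mulVec M z) ^ 2) ^ κ) ∂gaussMat p q (2 / p)
      ≤ ENNReal.ofReal (2 * (16 * κ / p * l2 u ^ 2 * l2 z ^ 2) ^ κ) := by
  rcases Nat.eq_zero_or_pos κ with rfl | hκ
  · simp [ENNReal.ofReal_ofNat]
  rcases eq_or_ne z 0 with rfl | hz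
  · simp [mulVec_zero, dot, hκ.ne']
  rcases eq_or_ne u 0 with rfl | hu
  · simp [dot, hκ.ne']
  have hz0 := l2_pos hz
  have hu0 := l2_pos hu
  set s : ℝ := 16 * κ / p * l2 u ^ 2 * l2 z ^ 2 with hs
  have hscale (y : ℝ) : κ * (y / s) = κ / s * y := by ring
  have hτ : 2 * (κ / s) * ((2 / p : NNReal) * l2 z ^ 2 * l2 u ^ 2) = 1 / 4 := by
    rw [hs]; push_cast; field_simp; ring
  have hsqrt : (√(1 - 1 / 4 : ℝ))⁻¹ ≤ 2 := by
    rw [inv_le_comm₀ (by positivity) two_pos]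
    exact Real.le_sqrt_of_sq_le (by norm_num)
  refine (lintegral_pow_le_lintegral_exp _ (fun M => sq_nonneg _) (s := s) (by positivity)
    κ).trans ?_
  simp only [hscale]
  rw [lintegral_exp_mul_dot_mulVec_sq _ u z (by rw [hτ]; norm_num), hτ,
    ← ENNReal.ofReal_mul (by positivity), mul_comm]
  refine ENNReal.ofReal_le_ofReal (mul_le_mul hsqrt ?_ (by positivity) two_pos.le)
  exact mul_le_of_le_one_right (by positivity) (Real.exp_le_one_iff.2 (by simp))

lemma gaussMat_relu_mulVec_eq_zero {v : NNReal} (hv : v ≠ 0) {h : Fin q → ℝ} (hh : h ≠ 0) :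
    gaussMat p q v {M | relu (mulVec M h) = 0} = 2⁻¹ ^ p := by
  have hset : {M : Fin p → Fin q → ℝ | relu (mulVec M h) = 0}
      = Set.univ.pi fun _ => {w | 0 ≤ ∑ j, (-w) j * h j} := by
    ext M
    simp [relu_eq_zero_iff, mulVec, Set.mem_pi]
  have hhalf : (Measure.pi fun _ : Fin q => gaussianReal 0 v) {w | 0 ≤ ∑ j, (-w) j * h j} = 2⁻¹ :=
    measure_eq_half_of_neg_mem_iff (measurable_neg (measurableSet_zero_le_sum_mul h)) <|
      (ae_neg_mem_halfspace_iff hv hh).mono fun w hw => by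
        simp only [Set.mem_ofPred_eq, neg_neg] at hw ⊢
        tauto
  rw [hset, gaussMat, Measure.pi_pi]
  simp only [hhalf, Finset.prod_const, Finset.card_univ, Fintype.card_fin]

end GaussianMatrix

/-! ### Redrawing one layer -/

section Redraw

variable {ι : Type*} [Fintype ι] [DecidableEq ι] {β : ι → Type*} [∀ i, MeasurableSpace (β i)]

lemma measurePreserving_update (μ : ∀ i, Measure (β i)) [∀ i, SigmaFinite (μ i)] (k : ι)
    [IsProbabilityMeasure (μ k)] :
    MeasurePreserving (fun z : (∀ i, β i) × β k => Function.update z.1 k z.2)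
      ((Measure.pi μ).prod (μ k)) (Measure.pi μ) := by
  refine ⟨measurable_update', (Measure.pi_eq fun s hs => ?_).symm⟩
  have hpre : (fun z : (∀ i, β i) × β k => Function.update z.1 k z.2) ⁻¹' Set.univ.pi s
      = Set.univ.pi (Function.update s k Set.univ) ×ˢ s k := by
    ext z
    simp only [Set.mem_preimage, Set.mem_univ_pi, Set.mem_prod]
    refine ⟨fun h => ⟨fun i => ?_, by simpa using h k⟩, fun h i => ?_⟩
    · rcases eq_or_ne i k with rfl | hi
      · simp
      · simpa [hi] using h i
    · rcases eq_or_ne i k with rfl | hi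
      · simpa using h.2
      · simpa [hi] using h.1 i
  rw [Measure.map_apply measurable_update' (MeasurableSet.univ_pi hs), hpre, Measure.prod_prod,
    Measure.pi_pi, ← Finset.mul_prod_erase _ _ (Finset.mem_univ k),
    ← Finset.mul_prod_erase _ _ (Finset.mem_univ k), Function.update_self, measure_univ, one_mul,
    mul_comm]
  congr 1
  exact Finset.prod_congr rfl fun i hi => by rw [Function.update_of_ne (Finset.ne_of_mem_erase hi)]

lemma lintegral_pi_update (μ : ∀ i, Measure (β i)) [∀ i, SigmaFinite (μ i)] (k : ι)
    [IsProbabilityMeasure (μ k)] {f : (∀ i, β i) → ENNReal} (hf : Measurable f) :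
    ∫⁻ w, ∫⁻ y, f (Function.update w k y) ∂μ k ∂Measure.pi μ = ∫⁻ w, f w ∂Measure.pi μ := by
  rw [← (measurePreserving_update μ k).lintegral_comp hf]
  exact (lintegral_prod (fun z : (∀ i, β i) × β k => f (Function.update z.1 k z.2))
    (hf.comp measurable_update').aemeasurable).symm

end Redraw

/-! ### The network at random initialization -/

/-- The parameter space of the network: the input matrix `A` together with the layer matrices
`W 0, …, W (L - 1)` (so `W k` is the weight matrix of layer `k + 1`). -/
abbrev Weights (𝔡 m L : ℕ) : Type := (Fin m → Fin 𝔡 → ℝ) × (Fin L → Fin m → Fin m → ℝ)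

section Network

lemma Wat_update_self (W : Fin L → Fin m → Fin m → ℝ) (k : Fin L) (M : Fin m → Fin m → ℝ) :
    Wat (Function.update W k M) (k + 1) = M := by
  simp [Wat, Nat.succ_le_of_lt k.2]

lemma Wat_update_of_le (W : Fin L → Fin m → Fin m → ℝ) {k : Fin L} (M : Fin m → Fin m → ℝ)
    {ℓ : ℕ} (h : ℓ ≤ k) : Wat (Function.update W k M) ℓ = Wat W ℓ := by
  unfold Wat
  split_ifs with hℓ
  · have hne : (⟨ℓ - 1, by omega⟩ : Fin L) ≠ k := Fin.ne_of_val_ne (show ℓ - 1 ≠ k by omega)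
    exact Function.update_of_ne hne M W
  · rfl

variable (A : Fin m → Fin 𝔡 → ℝ) (W : Fin L → Fin m → Fin m → ℝ) (x : Fin 𝔡 → ℝ)

lemma hseq_update_of_le {k : Fin L} (M : Fin m → Fin m → ℝ) {ℓ : ℕ} (h : ℓ ≤ k) :
    hseq A (Function.update W k M) x ℓ = hseq A W x ℓ := by
  induction ℓ with
  | zero => rfl
  | succ ℓ ih => rw [hseq, hseq, Wat_update_of_le _ _ h, ih (by omega)]

lemma hseq_update_succ (k : Fin L) (M : Fin m → Fin m → ℝ) :
    hseq A (Function.update W k M) x (k + 1) = relu (mulVec M (hseq A W x k)) := by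
  rw [hseq, if_pos (by omega), Wat_update_self, hseq_update_of_le A W x M le_rfl]

lemma gseq_update_of_le {k : Fin L} (M : Fin m → Fin m → ℝ) {ℓ : ℕ} (h : ℓ ≤ k) :
    gseq A (Function.update W k M) x ℓ = gseq A W x ℓ := by
  cases ℓ with
  | zero => rfl
  | succ ℓ => rw [gseq, gseq, Wat_update_of_le _ _ h, hseq_update_of_le A W x M (by omega)]

lemma gseq_update_succ (k : Fin L) (M : Fin m → Fin m → ℝ) :
    gseq A (Function.update W k M) x (k + 1) = mulVec M (hseq A W x k) := by
  rw [gseq, Wat_update_self, hseq_update_of_le A W x M le_rfl]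

lemma prodDW_succ (a b : ℕ) :
    prodDW A W x a (b + 1)
      = if a ≤ b + 1 ∧ b + 1 ≤ L then
          mmul (mmul (diagMat (signOf (gseq A W x (b + 1)))) (Wat W (b + 1))) (prodDW A W x a b)
        else prodDW A W x a b := rfl

lemma prodDW_update_of_le {k : Fin L} (M : Fin m → Fin m → ℝ) (a : ℕ) {b : ℕ} (h : b ≤ k) :
    prodDW A (Function.update W k M) x a b = prodDW A W x a b := by
  induction b with
  | zero => rfl
  | succ b ih =>
    rw [prodDW_succ, prodDW_succ, Wat_update_of_le _ _ h, ih (by omega),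
      gseq_update_of_le A W x M h]

lemma hseq_ne_zero_of_succ {ℓ : ℕ} (h : hseq A W x (ℓ + 1) ≠ 0) : hseq A W x ℓ ≠ 0 := by
  intro h0
  refine h ?_
  rw [hseq]
  split_ifs
  · rw [h0, mulVec_zero, relu_zero]
  · exact h0

lemma hseq_ne_zero_of_le {k ℓ : ℕ} (h : k ≤ ℓ) (hℓ : hseq A W x ℓ ≠ 0) : hseq A W x k ≠ 0 := by
  induction h with
  | refl => exact hℓ
  | step _ ih => exact ih (hseq_ne_zero_of_succ A W x hℓ)

end Network

section Measurability

variable {Ω : Type*} [MeasurableSpace Ω]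

@[fun_prop]
lemma measurable_relu {p : ℕ} {v : Ω → Fin p → ℝ} (hv : Measurable v) :
    Measurable fun ω => relu (v ω) := by
  unfold relu
  fun_prop

@[fun_prop]
lemma measurable_l2 {p : ℕ} {v : Ω → Fin p → ℝ} (hv : Measurable v) :
    Measurable fun ω => l2 (v ω) := by
  unfold l2
  fun_prop

@[fun_prop]
lemma measurable_dot {p : ℕ} {u v : Ω → Fin p → ℝ} (hu : Measurable u) (hv : Measurable v) :
    Measurable fun ω => dot (u ω) (v ω) := by
  unfold dot
  fun_prop

@[fun_prop]
lemma measurable_mulVec_diagMat_signOf {p : ℕ} {g v : Ω → Fin p → ℝ} (hg : Measurable g)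
    (hv : Measurable v) : Measurable fun ω => mulVec (diagMat (signOf (g ω))) (v ω) := by
  simp only [mulVec_diagMat, signOf]
  refine measurable_pi_lambda _ fun k => Measurable.mul (Measurable.ite ?_ (by fun_prop)
    (by fun_prop)) (by fun_prop)
  exact measurableSet_le measurable_const (by fun_prop)

@[fun_prop]
lemma measurable_Wat {W : Ω → Fin L → Fin m → Fin m → ℝ} (hW : Measurable W) (ℓ : ℕ) :
    Measurable fun ω => Wat (W ω) ℓ := by
  unfold Wat
  split_ifs <;> fun_prop

variable {A : Ω → Fin m → Fin 𝔡 → ℝ} {W : Ω → Fin L → Fin m → Fin m → ℝ}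

@[fun_prop]
lemma measurable_hseq (hA : Measurable A) (hW : Measurable W) (x : Fin 𝔡 → ℝ) (ℓ : ℕ) :
    Measurable fun ω => hseq (A ω) (W ω) x ℓ := by
  induction ℓ with
  | zero => simp only [hseq]; fun_prop
  | succ ℓ ih => simp only [hseq]; split_ifs <;> fun_prop

@[fun_prop]
lemma measurable_gseq (hA : Measurable A) (hW : Measurable W) (x : Fin 𝔡 → ℝ) (ℓ : ℕ) :
    Measurable fun ω => gseq (A ω) (W ω) x ℓ := by
  cases ℓ <;> simp only [gseq] <;> fun_prop

@[fun_prop]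
lemma measurable_mulVec_prodDW (hA : Measurable A) (hW : Measurable W) (x : Fin 𝔡 → ℝ)
    (v : Fin m → ℝ) (a b : ℕ) : Measurable fun ω => mulVec (prodDW (A ω) (W ω) x a b) v := by
  induction b with
  | zero => simp only [prodDW, chainProd, mulVec_idMat, measurable_const]
  | succ b ih =>
    simp only [prodDW_succ]
    split_ifs
    · simp only [mulVec_mmul]
      fun_prop
    · exact ih

lemma measurableSet_hseq_ne_zero (x : Fin 𝔡 → ℝ) (ℓ : ℕ) :
    MeasurableSet {z : Weights 𝔡 m L | hseq z.1 z.2 x ℓ ≠ 0} :=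
  (measurableSet_eq_fun (by fun_prop) measurable_const).compl

end Measurability

instance instIsProbabilityMeasureInitAW : IsProbabilityMeasure (initAW 𝔡 m L) := by
  unfold initAW
  infer_instance

lemma lintegral_initAW_update (k : Fin L) {f : Weights 𝔡 m L → ENNReal} (hf : Measurable f) :
    ∫⁻ z, ∫⁻ M, f (z.1, Function.update z.2 k M) ∂gaussMat m m (2 / m) ∂initAW 𝔡 m L
      = ∫⁻ z, f z ∂initAW 𝔡 m L := by
  have hupdate : Measurable fun y : Weights 𝔡 m L × (Fin m → Fin m → ℝ) =>
      f (y.1.1, Function.update y.1.2 k y.2) :=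
    hf.comp (measurable_fst.fst.prodMk
      (measurable_update'.comp (measurable_fst.snd.prodMk measurable_snd)))
  unfold initAW
  rw [lintegral_prod _ hf.aemeasurable, lintegral_prod _ hupdate.lintegral_prod_right'.aemeasurable]
  exact lintegral_congr fun A =>
    lintegral_pi_update _ k (f := fun W => f (A, W)) (hf.comp (by fun_prop))

lemma setLIntegral_initAW_le_of_update (k : Fin L) {S : Set (Weights 𝔡 m L)}
    (hS : MeasurableSet S) (hSk : ∀ z M, (z.1, Function.update z.2 k M) ∈ S ↔ z ∈ S)
    {f g : Weights 𝔡 m L → ENNReal} (hf : Measurable f) {K : ENNReal} (hK : K ≠ ⊤)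
    (h : ∀ z ∈ S, ∫⁻ M, f (z.1, Function.update z.2 k M) ∂gaussMat m m (2 / m) ≤ K * g z) :
    ∫⁻ z in S, f z ∂initAW 𝔡 m L ≤ K * ∫⁻ z in S, g z ∂initAW 𝔡 m L := by
  rw [← lintegral_indicator hS, ← lintegral_initAW_update k (hf.indicator hS),
    ← lintegral_const_mul' _ _ hK, ← lintegral_indicator hS]
  refine lintegral_mono fun z => ?_
  by_cases hz : z ∈ S
  · simpa [Set.indicator, hSk, hz] using h z hz
  · simp [Set.indicator, hSk, hz]

lemma initAW_hseq_eq_zero_le (hm : 0 < m) {x : Fin 𝔡 → ℝ} (hx : x ≠ 0) {ℓ : ℕ} (hℓ : ℓ ≤ L) :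
    initAW 𝔡 m L {z | hseq z.1 z.2 x ℓ = 0} ≤ (ℓ + 1) * 2⁻¹ ^ m := by
  have hvar : (2 / m : NNReal) ≠ 0 := by positivity
  induction ℓ with
  | zero =>
    have hset : {z : Weights 𝔡 m L | hseq z.1 z.2 x 0 = 0}
        = {A | relu (mulVec A x) = 0} ×ˢ Set.univ := by
      ext z
      simp [hseq]
    rw [hset, initAW, Measure.prod_prod, gaussMat_relu_mulVec_eq_zero hvar hx]
    simp
  | succ k ih =>
    set Z : ℕ → Set (Weights 𝔡 m L) := fun j => {z | hseq z.1 z.2 x j = 0}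
    have hZ : MeasurableSet (Z (k + 1)) := measurableSet_eq_fun (by fun_prop) measurable_const
    have hstep : initAW 𝔡 m L (Z (k + 1) \ Z k) ≤ 2⁻¹ ^ m := by
      rw [Set.sdiff_eq, ← Measure.restrict_apply hZ, ← lintegral_indicator_one hZ]
      refine (setLIntegral_initAW_le_of_update ⟨k, hℓ⟩ (measurableSet_hseq_ne_zero x k)
        (fun z M => by simp [hseq_update_of_le z.1 z.2 x M (k := ⟨k, hℓ⟩) le_rfl])
        (measurable_one.indicator hZ) (g := fun _ => 1) (by simp) fun z hz => ?_).trans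
        (mul_le_of_le_one_right' (by rw [setLIntegral_one]; exact prob_le_one))
      rw [← gaussMat_relu_mulVec_eq_zero hvar hz, mul_one, ← lintegral_indicator_one
        (measurableSet_eq_fun (by fun_prop) measurable_const)]
      refine (lintegral_congr fun M => ?_).le
      simp [Z, Set.indicator, hseq_update_succ z.1 z.2 x ⟨k, hℓ⟩ M]
    calc initAW 𝔡 m L (Z (k + 1)) ≤ initAW 𝔡 m L (Z k ∪ Z (k + 1) \ Z k) :=
          measure_mono (Set.union_sdiff_self.symm.subset.trans' Set.subset_union_right)
      _ ≤ (k + 1) * 2⁻¹ ^ m + 2⁻¹ ^ m :=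
          (measure_union_le _ _).trans (add_le_add (ih (by omega)) hstep)
      _ = _ := by push_cast; ring

/-! ### Moments and tails of intermediate products -/

/-- The intermediate product `W_{k+1} D_k W_k ⋯ D_a W_a` for the input `x`. The index of its last
layer is written as a successor so that `k` ranges over `Fin L`. -/
def midProd (z : Weights 𝔡 m L) (x : Fin 𝔡 → ℝ) (a k : ℕ) : Fin m → Fin m → ℝ :=
  mmul (Wat z.2 (k + 1)) (prodDW z.1 z.2 x a k)

section Moments

variable {κ : ℕ} (x : Fin 𝔡 → ℝ) (v : Fin m → ℝ) (a : ℕ)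

lemma setLIntegral_l2_prodDW_pow_le (hκ : 16 * κ ≤ m) (b : ℕ) :
    ∫⁻ z in {z | hseq z.1 z.2 x b ≠ 0},
        ENNReal.ofReal ((l2 (mulVec (prodDW z.1 z.2 x a b) v) ^ 2) ^ κ) ∂initAW 𝔡 m L
      ≤ ENNReal.ofReal (Real.exp (6 * κ ^ 2 / m) ^ b * (l2 v ^ 2) ^ κ) := by
  set G : ℝ := Real.exp (6 * κ ^ 2 / m)
  have hG : 1 ≤ G := Real.one_le_exp (by positivity)
  induction b with
  | zero =>
    simp only [prodDW, chainProd, mulVec_idMat, pow_zero, one_mul, lintegral_const,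
      Measure.restrict_apply_univ]
    exact mul_le_of_le_one_right' prob_le_one
  | succ b ih =>
    refine (lintegral_mono_set fun z hz => hseq_ne_zero_of_succ _ _ _ hz).trans ?_
    by_cases h : a ≤ b + 1 ∧ b + 1 ≤ L
    · refine (setLIntegral_initAW_le_of_update ⟨b, h.2⟩ (measurableSet_hseq_ne_zero x b)
        (fun z M => by simp [hseq_update_of_le z.1 z.2 x M (k := ⟨b, h.2⟩) le_rfl])
        (by fun_prop) (K := ENNReal.ofReal G) (by simp) fun z hz => ?_).trans
        ((mul_le_mul_right ih _).trans_eq ?_)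
      · simp only [prodDW_succ, if_pos h, mulVec_mmul, gseq_update_succ z.1 z.2 x ⟨b, h.2⟩,
          Wat_update_self z.2 ⟨b, h.2⟩, prodDW_update_of_le z.1 z.2 x (k := ⟨b, h.2⟩) _ a le_rfl]
        exact (lintegral_l2_signOf_mulVec_pow_le hκ hz _).trans_eq
          (ENNReal.ofReal_mul (Real.exp_nonneg _))
      · rw [← ENNReal.ofReal_mul (by positivity), pow_succ' G, mul_assoc]
    · simp only [prodDW_succ, if_neg h]
      refine ih.trans (ENNReal.ofReal_le_ofReal ?_)
      gcongr
      exact b.le_succ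

lemma setLIntegral_midProd_pow_le (hκ : 16 * κ ≤ m) (k : Fin L) {Q : (Fin m → ℝ) → ℝ}
    (hQm : Measurable Q) {K : ℝ}
    (hQ : ∀ y : Fin m → ℝ, ∫⁻ M, ENNReal.ofReal (Q (mulVec M y) ^ κ) ∂gaussMat m m (2 / m)
      ≤ ENNReal.ofReal (K * (l2 y ^ 2) ^ κ)) :
    ∫⁻ z in {z | hseq z.1 z.2 x k ≠ 0},
        ENNReal.ofReal (Q (mulVec (midProd z x a k) v) ^ κ) ∂initAW 𝔡 m L
      ≤ ENNReal.ofReal (K * (Real.exp (6 * κ ^ 2 / m) ^ (k : ℕ) * (l2 v ^ 2) ^ κ)) := by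
  simp only [midProd, mulVec_mmul]
  refine (setLIntegral_initAW_le_of_update k (measurableSet_hseq_ne_zero x k)
    (fun z M => by simp [hseq_update_of_le z.1 z.2 x M le_rfl])
    (by fun_prop) (K := ENNReal.ofReal K) (by simp) fun z _ => ?_).trans
    ((mul_le_mul_right (setLIntegral_l2_prodDW_pow_le x v a hκ k) _).trans_eq
      (ENNReal.ofReal_mul' (by positivity)).symm)
  simp only [Wat_update_self, prodDW_update_of_le z.1 z.2 x _ a le_rfl]
  exact (hQ _).trans_eq (ENNReal.ofReal_mul' (by positivity))

lemma exp_growth_pow_le (hκ : 60 * κ * L ≤ m) {b : ℕ} (hb : b ≤ L) :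
    Real.exp (6 * κ ^ 2 / m) ^ b ≤ Real.exp (κ / 10) := by
  have hκL : (60 : ℝ) * κ * L ≤ m := mod_cast hκ
  have hbL : (b : ℝ) ≤ L := mod_cast hb
  rw [← Real.exp_nat_mul, Real.exp_le_exp, ← mul_div_assoc]
  refine div_le_of_le_mul₀ (by positivity) (by positivity) ?_
  calc (b : ℝ) * (6 * (κ : ℝ) ^ 2) ≤ L * (6 * (κ : ℝ) ^ 2) := by gcongr
    _ = (κ : ℝ) / 10 * (60 * κ * L) := by ring
    _ ≤ (κ : ℝ) / 10 * m := by gcongr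

lemma two_thirds_pow_le_exp (κ : ℕ) : (2 / 3 : ℝ) ^ κ ≤ Real.exp (-(κ / 3)) :=
  calc (2 / 3 : ℝ) ^ κ ≤ Real.exp (-(1 / 3)) ^ κ := by
        gcongr
        linarith [Real.add_one_le_exp (-(1 / 3 : ℝ))]
    _ = Real.exp (-(κ / 3)) := by
        rw [← Real.exp_nat_mul]
        congr 1
        ring

-- Of the decay `(2 / 3) ^ κ ≤ exp (-κ / 3)`, the last layer and the growth of the earlier layers
-- use up at most `exp (κ / 10)` each, and `1 / 3 - 2 / 10 ≥ 1 / 8`.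
lemma moment_bound_le_exp_neg_mul_pow (hκ : 60 * κ * L ≤ m) {v : Fin m → ℝ} (hv : l2 v ≤ 1)
    {b : ℕ} (hb : b ≤ L) {K s : ℝ} (hs : 0 < s) (hK : K ≤ (2 / 3 * s) ^ κ * Real.exp (κ / 10)) :
    K * (Real.exp (6 * κ ^ 2 / m) ^ b * (l2 v ^ 2) ^ κ) ≤ Real.exp (-(κ / 8)) * s ^ κ :=
  calc K * (Real.exp (6 * κ ^ 2 / m) ^ b * (l2 v ^ 2) ^ κ)
      ≤ (2 / 3 * s) ^ κ * Real.exp (κ / 10) * (Real.exp (κ / 10) * 1) := by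
        gcongr
        · exact exp_growth_pow_le hκ hb
        · exact pow_le_one₀ (sq_nonneg _) (pow_le_one₀ (l2_nonneg v) hv)
    _ = (2 / 3) ^ κ * Real.exp (κ / 10) * Real.exp (κ / 10) * s ^ κ := by
        rw [mul_pow]
        ring
    _ ≤ Real.exp (-(κ / 3)) * Real.exp (κ / 10) * Real.exp (κ / 10) * s ^ κ := by
        gcongr
        exact two_thirds_pow_le_exp κ
    _ ≤ Real.exp (-(κ / 8)) * s ^ κ := by
        rw [← Real.exp_add, ← Real.exp_add]
        gcongr
        linarith [(Nat.cast_nonneg κ : (0 : ℝ) ≤ κ)]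

lemma initAW_lt_midProd_le (hκ : 60 * κ * L ≤ m) (hv : l2 v ≤ 1) (k : Fin L)
    {Q : (Fin m → ℝ) → ℝ} (hQm : Measurable Q) {K s : ℝ} (hs : 0 < s)
    (hK : K ≤ (2 / 3 * s) ^ κ * Real.exp (κ / 10))
    (hQ : ∀ y : Fin m → ℝ, ∫⁻ M, ENNReal.ofReal (Q (mulVec M y) ^ κ) ∂gaussMat m m (2 / m)
      ≤ ENNReal.ofReal (K * (l2 y ^ 2) ^ κ)) :
    initAW 𝔡 m L {z | hseq z.1 z.2 x k ≠ 0 ∧ s < Q (mulVec (midProd z x a k) v)}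
      ≤ ENNReal.ofReal (Real.exp (-(κ / 8))) := by
  have h16 : 16 * κ ≤ m := by nlinarith [k.pos]
  have hmeas : Measurable fun z : Weights 𝔡 m L =>
      ENNReal.ofReal (Q (mulVec (midProd z x a k) v) ^ κ) := by
    simp only [midProd, mulVec_mmul]
    fun_prop
  calc initAW 𝔡 m L {z | hseq z.1 z.2 x k ≠ 0 ∧ s < Q (mulVec (midProd z x a k) v)}
      ≤ (initAW 𝔡 m L).restrict {z | hseq z.1 z.2 x k ≠ 0}
          {z | ENNReal.ofReal (s ^ κ) ≤ ENNReal.ofReal (Q (mulVec (midProd z x a k) v) ^ κ)} := by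
        rw [Measure.restrict_apply (measurableSet_le measurable_const hmeas)]
        exact measure_mono fun z hz =>
          ⟨ENNReal.ofReal_le_ofReal (pow_le_pow_left₀ hs.le hz.2.le κ), hz.1⟩
    _ ≤ _ := meas_ge_le_lintegral_div hmeas.aemeasurable (by simp [hs]) ENNReal.ofReal_ne_top
    _ ≤ ENNReal.ofReal (Real.exp (-(κ / 8))) := by
        refine ENNReal.div_le_of_le_mul ?_
        rw [← ENNReal.ofReal_mul (Real.exp_nonneg _)]
        exact (setLIntegral_midProd_pow_le x v a h16 k hQm hQ).trans
          (ENNReal.ofReal_le_ofReal (moment_bound_le_exp_neg_mul_pow hκ hv k.2.le hs hK))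

lemma initAW_three_lt_l2_midProd_sq_le (hκ : 60 * κ * L ≤ m) (hv : l2 v ≤ 1) (k : Fin L) :
    initAW 𝔡 m L {z | hseq z.1 z.2 x k ≠ 0 ∧ 3 < l2 (mulVec (midProd z x a k) v) ^ 2}
      ≤ ENNReal.ofReal (Real.exp (-(κ / 8))) := by
  have hL : 1 ≤ L := k.pos
  refine initAW_lt_midProd_le x v a hκ hv k (Q := fun y => l2 y ^ 2) (by fun_prop) three_pos
    (K := (2 / 3 * 3) ^ κ * Real.exp (6 * κ ^ 2 / m)) ?_ fun y =>
      (lintegral_l2_mulVec_pow_le (by nlinarith) y).trans_eq ?_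
  · refine mul_le_mul_of_nonneg_left ?_ (by positivity)
    simpa only [pow_one] using exp_growth_pow_le hκ hL
  · congr 1
    rw [mul_pow]
    norm_num
    ring

lemma initAW_lt_dot_midProd_sq_le (hm : 0 < m) (hκ0 : 0 < κ) (hκ : 60 * κ * L ≤ m)
    (hv : l2 v ≤ 1) {u : Fin m → ℝ} (hu : l2 u ≤ 1) (k : Fin L) :
    initAW 𝔡 m L {z | hseq z.1 z.2 x k ≠ 0 ∧
        1 / (L : ℝ) < dot u (mulVec (midProd z x a k) v) ^ 2}
      ≤ ENNReal.ofReal (Real.exp (-(κ / 8))) := by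
  have hm' : (0 : ℝ) < m := mod_cast hm
  have hL' : (0 : ℝ) < L := mod_cast k.pos
  have hκL : (60 : ℝ) * κ * L ≤ m := mod_cast hκ
  refine initAW_lt_midProd_le x v a hκ hv k (Q := fun y => dot u y ^ 2) (by fun_prop)
    (one_div_pos.2 hL') (K := 2 * (16 * κ / m) ^ κ) ?_ fun y =>
      (lintegral_dot_mulVec_pow_le hm κ u y).trans (ENNReal.ofReal_le_ofReal ?_)
  · calc 2 * (16 * κ / m : ℝ) ^ κ ≤ 2 ^ κ * (16 * κ / m) ^ κ := by
          gcongr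
          exact le_self_pow₀ one_le_two hκ0.ne'
      _ = (2 * (16 * κ / m)) ^ κ := (mul_pow _ _ _).symm
      _ ≤ (2 / 3 * (1 / L)) ^ κ := by
          refine pow_le_pow_left₀ (by positivity) ?_ κ
          rw [← mul_div_assoc, ← mul_div_assoc, div_le_div_iff₀ hm' hL']
          linarith
      _ ≤ _ := le_mul_of_one_le_right (by positivity) (Real.one_le_exp (by positivity))
  · rw [mul_assoc 2, ← mul_pow]
    gcongr
    exact mul_le_of_le_one_right (by positivity) (pow_le_one₀ (l2_nonneg u) hu)

end Moments

/-! ### Nets -/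

section Nets

open Metric Module

section Normed

variable {E : Type*} [NormedAddCommGroup E] [NormedSpace ℝ E]

-- The balls of radius `ε / 2` around the points of a separated set are disjoint and lie in the ball
-- of radius `1 + ε / 2`; compare volumes.
lemma card_le_of_isSeparated_of_subset_closedBall [FiniteDimensional ℝ E] {ε : NNReal} (hε : 0 < ε)
    {s : Finset E} (hs : IsSeparated ε (s : Set E)) (hs1 : (s : Set E) ⊆ closedBall 0 1) :
    (s.card : ℝ) ≤ (1 + 2 / ε) ^ finrank ℝ E := by
  borelize E
  let μ : Measure E := Measure.addHaar
  have hε2 : (0 : ℝ) < ε / 2 := by positivity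
  have hdisj : (s : Set E).PairwiseDisjoint fun c => ball c (ε / 2 : ℝ) := fun c hc d hd hcd =>
    ball_disjoint_ball <| by
      have hlt : (ε : ENNReal) < edist c d := hs hc hd hcd
      rw [edist_nndist, ENNReal.coe_lt_coe, ← NNReal.coe_lt_coe, coe_nndist] at hlt
      linarith
  have hsub : (⋃ c ∈ s, ball c (ε / 2 : ℝ)) ⊆ ball 0 (1 + ε / 2) :=
    Set.iUnion₂_subset fun c hc => ball_subset_ball' <| by
      linarith [mem_closedBall.1 (hs1 hc)]
  have hvol := measure_mono (μ := μ) hsub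
  rw [measure_biUnion_finset hdisj fun _ _ => measurableSet_ball] at hvol
  simp only [μ.addHaar_ball_of_pos _ hε2,
    μ.addHaar_ball_of_pos _ (show (0 : ℝ) < 1 + ε / 2 by positivity),
    Finset.sum_const, nsmul_eq_mul, ← mul_assoc] at hvol
  have hcard := ENNReal.toReal_le_of_le_ofReal (by positivity)
    ((ENNReal.mul_le_mul_iff_left (measure_ball_pos _ _ one_pos).ne'
      measure_ball_lt_top.ne).1 hvol)
  rw [ENNReal.toReal_mul, ENNReal.toReal_natCast, ENNReal.toReal_ofReal (by positivity)] at hcard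
  have hsplit : 1 + (ε : ℝ) / 2 = (1 + 2 / ε) * (ε / 2) := by field_simp; ring
  rw [hsplit, mul_pow] at hcard
  exact le_of_mul_le_mul_right hcard (by positivity)

lemma coveringNumber_closedBall_le [FiniteDimensional ℝ E] {ε : NNReal} (hε : 0 < ε) :
    coveringNumber ε (closedBall (0 : E) 1) ≤ ⌊(1 + 2 / ε : ℝ) ^ finrank ℝ E⌋₊ := by
  refine (coveringNumber_le_packingNumber ε _).trans (iSup_le fun s => iSup₂_le fun hs1 hs => ?_)
  by_contra! hlt
  obtain ⟨t, hts, ht⟩ := Set.exists_subset_encard_eq (Order.add_one_le_of_lt hlt)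
  lift t to Finset E using Set.finite_of_encard_eq_coe (mod_cast ht)
  have hcard := Nat.le_floor
    (card_le_of_isSeparated_of_subset_closedBall hε (hs.subset hts) (hts.trans hs1))
  rw [Set.encard_coe_eq_coe_finsetCard] at ht
  have : t.card = ⌊(1 + 2 / ε : ℝ) ^ finrank ℝ E⌋₊ + 1 := mod_cast ht
  omega

/-- The points of `P` lying in the subspace `V` form an `ε`-net of the closed unit ball of `V`.
Since `P` may contain points outside `V`, one finite set can serve many subspaces. -/
def IsUnitBallNet (ε : NNReal) (P : Finset E) (V : Submodule ℝ E) : Prop :=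
  IsCover ε ((V : Set E) ∩ closedBall 0 1) ((P : Set E) ∩ V)

lemma exists_isUnitBallNet {ε : NNReal} (hε : 0 < ε) (V : Submodule ℝ E) [FiniteDimensional ℝ V] :
    ∃ P : Finset E, (P.card : ℝ) ≤ (1 + 2 / ε) ^ finrank ℝ V ∧ (∀ c ∈ P, ‖c‖ ≤ 1) ∧
      IsUnitBallNet ε P V := by
  have himage : V.subtype '' closedBall 0 1 = (V : Set E) ∩ closedBall 0 1 := by
    ext v
    simp [and_comm]
  have hcov : coveringNumber ε ((V : Set E) ∩ closedBall 0 1)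
      ≤ ⌊(1 + 2 / ε : ℝ) ^ finrank ℝ V⌋₊ := by
    rw [← himage]
    exact V.subtypeₗᵢ.isometry.coveringNumber_image.trans_le (coveringNumber_closedBall_le hε)
  have htop := (hcov.trans_lt (ENat.natCast_lt_top _)).ne
  have hsub : minimalCover ε ((V : Set E) ∩ closedBall 0 1) ⊆ (V : Set E) ∩ closedBall 0 1 :=
    minimalCover_subset
  have hcover := isCover_minimalCover htop
  have hcard := (encard_minimalCover htop).trans_le hcov
  lift minimalCover ε ((V : Set E) ∩ closedBall 0 1) to Finset E using finite_minimalCover with P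
  refine ⟨P, ?_, fun c hc => by simpa using (hsub hc).2, ?_⟩
  · rw [Set.encard_coe_eq_coe_finsetCard, Nat.cast_le] at hcard
    exact (Nat.cast_le.2 hcard).trans (Nat.floor_le (by positivity))
  · rwa [IsUnitBallNet, Set.inter_eq_left.2 (hsub.trans Set.inter_subset_left)]

lemma exists_forall_isUnitBallNet {ε : NNReal} (hε : 0 < ε) {ι : Type*} (I : Finset ι)
    (V : ι → Submodule ℝ E) [∀ i, FiniteDimensional ℝ (V i)] {d : ℕ}
    (hd : ∀ i ∈ I, finrank ℝ (V i) ≤ d) :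
    ∃ P : Finset E, (P.card : ℝ) ≤ I.card * (1 + 2 / ε) ^ d ∧ (∀ c ∈ P, ‖c‖ ≤ 1) ∧
      ∀ i ∈ I, IsUnitBallNet ε P (V i) := by
  classical
  choose N hcard hN1 hN using fun i => exists_isUnitBallNet hε (V i)
  have hbase : (1 : ℝ) ≤ 1 + 2 / ε := le_add_of_nonneg_right (by positivity)
  refine ⟨I.biUnion N, ?_, fun c hc => ?_, fun i hi => (hN i).mono ?_⟩
  · calc ((I.biUnion N).card : ℝ) ≤ ∑ i ∈ I, ((N i).card : ℝ) := mod_cast Finset.card_biUnion_le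
      _ ≤ ∑ _i ∈ I, (1 + 2 / (ε : ℝ)) ^ d := Finset.sum_le_sum fun i hi =>
          (hcard i).trans (pow_le_pow_right₀ hbase (hd i hi))
      _ = I.card * (1 + 2 / ε) ^ d := by rw [Finset.sum_const, nsmul_eq_mul]
  · obtain ⟨i, -, hi⟩ := Finset.mem_biUnion.1 hc
    exact hN1 i c hi
  · exact Set.inter_subset_inter_left _ (mod_cast Finset.subset_biUnion_of_mem N hi)

lemma IsUnitBallNet.norm_map_le {ε : NNReal} {P : Finset E} {V : Submodule ℝ E}
    (hP : IsUnitBallNet ε P V) (hε : ε < 1) {F : Type*} [SeminormedAddCommGroup F]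
    [NormedSpace ℝ F] (T : E →L[ℝ] F) {B : ℝ} (hB : ∀ c ∈ P, ‖T c‖ ≤ B) {v : E} (hv : v ∈ V) :
    ‖T v‖ ≤ B / (1 - ε) * ‖v‖ := by
  have hB0 : 0 ≤ B := by
    obtain ⟨c, hc, -⟩ := hP (x := 0) (by simp)
    exact (norm_nonneg _).trans (hB c hc.1)
  set S : V →L[ℝ] F := T.comp V.subtypeL
  have hself : ‖S‖ ≤ B + ε * ‖S‖ := by
    refine S.opNorm_le_of_unit_norm (by positivity) fun w hw => ?_
    obtain ⟨c, ⟨hcP, hcV⟩, hwc⟩ := hP (x := w) ⟨w.2, by simpa using hw.le⟩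
    have hdist : ‖w - ⟨c, hcV⟩‖ ≤ ε := by
      rw [← dist_eq_norm]
      exact mod_cast hwc
    calc ‖S w‖ = ‖T c + S (w - ⟨c, hcV⟩)‖ := by simp [S]
      _ ≤ ‖T c‖ + ‖S (w - ⟨c, hcV⟩)‖ := norm_add_le _ _
      _ ≤ B + ε * ‖S‖ := by
          rw [mul_comm]
          exact add_le_add (hB c hcP) (S.le_opNorm_of_le hdist)
  have hε1 : (0 : ℝ) < 1 - ε := sub_pos.2 (mod_cast hε)
  exact S.le_of_opNorm_le ((le_div_iff₀ hε1).2 (by linarith)) ⟨v, hv⟩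

end Normed

lemma IsUnitBallNet.abs_inner_map_le {E F : Type*} [NormedAddCommGroup E] [NormedSpace ℝ E]
    [NormedAddCommGroup F] [InnerProductSpace ℝ F] {ε : NNReal} (hε : ε < 1)
    {P : Finset F} {U : Submodule ℝ F} (hP : IsUnitBallNet ε P U)
    {Q : Finset E} {V : Submodule ℝ E} (hQ : IsUnitBallNet ε Q V) (T : E →L[ℝ] F) {B : ℝ}
    (hB : ∀ c ∈ P, ∀ c' ∈ Q, |inner ℝ c (T c')| ≤ B) {u : F} (hu : u ∈ U) {v : E} (hv : v ∈ V) :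
    |inner ℝ u (T v)| ≤ B / (1 - ε) ^ 2 * ‖u‖ * ‖v‖ := by
  have hleft (c) (hc : c ∈ P) : ‖innerSL ℝ (T v) c‖ ≤ B / (1 - ε) * ‖v‖ := by
    simpa [real_inner_comm] using
      hQ.norm_map_le hε ((innerSL ℝ c).comp T) (fun c' hc' => by simpa using hB c hc c' hc') hv
  calc |inner ℝ u (T v)| = ‖innerSL ℝ (T v) u‖ := by simp [real_inner_comm]
    _ ≤ B / (1 - ε) * ‖v‖ / (1 - ε) * ‖u‖ := hP.norm_map_le hε _ hleft hu
    _ = B / (1 - ε) ^ 2 * ‖u‖ * ‖v‖ := by rw [sq, ← div_div]; ring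

section Coordinates

variable {ι κ : Type*} [Fintype ι] [Fintype κ]

/-- The subspace of vectors supported on `S`. -/
def coordSubspace [DecidableEq ι] (S : Finset ι) : Submodule ℝ (EuclideanSpace ℝ ι) :=
  Submodule.span ℝ (S.image fun k => EuclideanSpace.single k (1 : ℝ))

lemma mem_coordSubspace [DecidableEq ι] {S : Finset ι} {v : EuclideanSpace ℝ ι}
    (hv : ∀ k ∉ S, v k = 0) : v ∈ coordSubspace S := by
  have hsum : v = ∑ k ∈ S, v k • EuclideanSpace.single k (1 : ℝ) := by
    ext i
    by_cases hi : i ∈ S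
    · simp [Finset.sum_apply, Pi.single_apply, hi]
    · simp [Finset.sum_apply, Pi.single_apply, hi, hv i hi]
  rw [hsum]
  exact Submodule.sum_mem _ fun k hk =>
    Submodule.smul_mem _ _ (Submodule.subset_span (Finset.mem_image_of_mem _ hk))

lemma finrank_coordSubspace_le [DecidableEq ι] (S : Finset ι) :
    finrank ℝ (coordSubspace S) ≤ S.card :=
  (finrank_span_finset_le_card _).trans Finset.card_image_le

lemma opNorm_le_of_blocks (b : ι → κ) {F : Type*} [SeminormedAddCommGroup F] [NormedSpace ℝ F]
    (T : EuclideanSpace ℝ ι →L[ℝ] F) {B : ℝ} (hB0 : 0 ≤ B)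
    (hB : ∀ j (v : EuclideanSpace ℝ ι), (∀ k, b k ≠ j → v k = 0) → ‖T v‖ ≤ B * ‖v‖) :
    ‖T‖ ≤ B * √(Fintype.card κ) := by
  classical
  refine T.opNorm_le_bound (by positivity) fun v => ?_
  let w (j : κ) : EuclideanSpace ℝ ι := WithLp.toLp 2 fun k => if b k = j then v k else 0
  have hv : v = ∑ j, w j := by
    ext k
    simp [w]
  have hsq : ∑ j, ‖w j‖ ^ 2 = ‖v‖ ^ 2 := by
    simp only [EuclideanSpace.real_norm_sq_eq, w, ite_pow]
    rw [Finset.sum_comm]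
    simp
  have hcs : ∑ j, ‖w j‖ ≤ √(Fintype.card κ) * ‖v‖ := by
    refine abs_le_of_sq_le_sq' ?_ (by positivity) |>.2
    rw [mul_pow, Real.sq_sqrt (Nat.cast_nonneg _), ← hsq]
    exact sq_sum_le_card_mul_sum_sq
  calc ‖T v‖ = ‖∑ j, T (w j)‖ := by rw [← map_sum, ← hv]
    _ ≤ ∑ j, B * ‖w j‖ := norm_sum_le_of_le _ fun j _ => hB j (w j) fun k hk => by simp [w, hk]
    _ ≤ B * (√(Fintype.card κ) * ‖v‖) := by rw [← Finset.mul_sum]; gcongr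
    _ = _ := (mul_assoc _ _ _).symm

variable [DecidableEq ι] [DecidableEq κ] {ε : NNReal} {b : ι → κ} {Q : Finset (EuclideanSpace ℝ ι)}

lemma opNorm_le_of_blockNets (hε : ε < 1)
    (hQ : ∀ j, IsUnitBallNet ε Q (coordSubspace {k | b k = j})) {F : Type*}
    [SeminormedAddCommGroup F] [NormedSpace ℝ F] (T : EuclideanSpace ℝ ι →L[ℝ] F) {B : ℝ}
    (hB0 : 0 ≤ B) (hB : ∀ c ∈ Q, ‖T c‖ ≤ B) : ‖T‖ ≤ B / (1 - ε) * √(Fintype.card κ) :=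
  opNorm_le_of_blocks b T (div_nonneg hB0 (sub_nonneg.2 (mod_cast hε.le))) fun j v hv =>
    (hQ j).norm_map_le hε T hB (mem_coordSubspace fun k hk => hv k (by simpa using hk))

lemma norm_adjoint_le_of_blockNets (hε : ε < 1)
    (hQ : ∀ j, IsUnitBallNet ε Q (coordSubspace {k | b k = j})) {F : Type*}
    [NormedAddCommGroup F] [InnerProductSpace ℝ F] [CompleteSpace F] {P : Finset F}
    {U : Submodule ℝ F} (hP : IsUnitBallNet ε P U) (T : EuclideanSpace ℝ ι →L[ℝ] F) {B : ℝ}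
    (hB0 : 0 ≤ B) (hB : ∀ c ∈ P, ∀ c' ∈ Q, |inner ℝ c (T c')| ≤ B) {u : F} (hu : u ∈ U) :
    ‖T.adjoint u‖ ≤ B / (1 - ε) ^ 2 * ‖u‖ * √(Fintype.card κ) := by
  rw [← innerSL_apply_norm (𝕜 := ℝ)]
  refine opNorm_le_of_blocks b _ (by positivity) fun j v hv => ?_
  rw [innerSL_apply_apply, ContinuousLinearMap.adjoint_inner_left, Real.norm_eq_abs]
  exact hP.abs_inner_map_le hε (hQ j) T hB hu
    (mem_coordSubspace fun k hk => hv k (by simpa using hk))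

end Coordinates

end Nets

/-! ### From nets to norms -/

section Operators

variable {p : ℕ} (M : Fin p → Fin p → ℝ)

/-- The operator on Euclidean space with matrix `M`, which expresses `l2`, `dot` and `spec` through
Mathlib's norm, inner product and operator norm. -/
def toCLM : EuclideanSpace ℝ (Fin p) →L[ℝ] EuclideanSpace ℝ (Fin p) :=
  Matrix.toEuclideanCLM (𝕜 := ℝ) (Matrix.of M)

lemma toCLM_toLp (v : Fin p → ℝ) : toCLM M (WithLp.toLp 2 v) = WithLp.toLp 2 (mulVec M v) := rfl

lemma toCLM_transpose : toCLM (transpose M) = (toCLM M).adjoint :=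
  map_star (Matrix.toEuclideanCLM (𝕜 := ℝ)) (Matrix.of M)

lemma dot_eq_inner (u v : Fin p → ℝ) :
    dot u v = inner ℝ (WithLp.toLp 2 u) (WithLp.toLp 2 v) := by
  simp [dot, PiLp.inner_apply, mul_comm]

lemma spec_le_opNorm : spec M ≤ ‖toCLM M‖ := by
  refine csSup_le ⟨_, 0, by simp [l2_zero], rfl⟩ ?_
  rintro r ⟨v, hv, rfl⟩
  rw [l2_eq_norm] at hv
  rw [l2_eq_norm, ← toCLM_toLp]
  exact (toCLM M).unit_le_opNorm _ hv

variable {M} {κ : Type*} [Fintype κ] [DecidableEq κ] {b : Fin p → κ}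
  {P Q : Finset (EuclideanSpace ℝ (Fin p))} {V : Submodule ℝ (EuclideanSpace ℝ (Fin p))}

lemma one_eighth_lt_one : (1 / 8 : NNReal) < 1 := by norm_num

lemma norm_toCLM_le_of_sq_le {c : EuclideanSpace ℝ (Fin p)}
    (h : l2 (mulVec M c.ofLp) ^ 2 ≤ 3) : ‖toCLM M c‖ ≤ 7 / 4 := by
  rw [l2_eq_norm, ← toCLM_toLp, WithLp.toLp_ofLp] at h
  nlinarith [norm_nonneg (toCLM M c)]

lemma spec_le_of_blockNets
    (hQ : ∀ j, IsUnitBallNet (1 / 8) Q (coordSubspace {k | b k = j}))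
    (h : ∀ c ∈ Q, l2 (mulVec M c.ofLp) ^ 2 ≤ 3) : spec M ≤ 2 * √(Fintype.card κ) := by
  refine (spec_le_opNorm M).trans ((opNorm_le_of_blockNets one_eighth_lt_one hQ (toCLM M)
    (by norm_num) fun c hc => norm_toCLM_le_of_sq_le (h c hc)).trans_eq ?_)
  norm_num

lemma l2_mulVec_le_of_net (hP : IsUnitBallNet (1 / 8) P V)
    (h : ∀ c ∈ P, l2 (mulVec M c.ofLp) ^ 2 ≤ 3) {v : Fin p → ℝ} (hv : WithLp.toLp 2 v ∈ V) :
    l2 (mulVec M v) ≤ 2 * l2 v := by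
  rw [l2_eq_norm, l2_eq_norm, ← toCLM_toLp]
  refine (hP.norm_map_le one_eighth_lt_one (toCLM M)
    (fun c hc => norm_toCLM_le_of_sq_le (h c hc)) hv).trans_eq ?_
  norm_num

lemma l2_transpose_mulVec_le_of_blockNets
    (hQ : ∀ j, IsUnitBallNet (1 / 8) Q (coordSubspace {k | b k = j}))
    (hP : IsUnitBallNet (1 / 8) P V) {ρ : ℝ} (hρ : 0 ≤ ρ)
    (h : ∀ c ∈ P, ∀ c' ∈ Q, dot c.ofLp (mulVec M c'.ofLp) ^ 2 ≤ ρ ^ 2) {u : Fin p → ℝ}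
    (hu : WithLp.toLp 2 u ∈ V) :
    l2 (mulVec (transpose M) u) ≤ 2 * ρ * √(Fintype.card κ) * l2 u := by
  have hinner (c) (hc : c ∈ P) (c') (hc' : c' ∈ Q) : |inner ℝ c (toCLM M c')| ≤ ρ := by
    have hsq := h c hc c' hc'
    rw [dot_eq_inner] at hsq
    exact abs_le_of_sq_le_sq hsq hρ
  rw [l2_eq_norm, l2_eq_norm, ← toCLM_toLp, toCLM_transpose]
  refine (norm_adjoint_le_of_blockNets one_eighth_lt_one hQ hP (toCLM M) hρ hinner hu).trans ?_
  calc ρ / (1 - (1 / 8 : NNReal)) ^ 2 * ‖WithLp.toLp 2 u‖ * √(Fintype.card κ)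
      = 64 / 49 * (ρ * √(Fintype.card κ) * ‖WithLp.toLp 2 u‖) := by
        norm_num
        ring
    _ ≤ 2 * (ρ * √(Fintype.card κ) * ‖WithLp.toLp 2 u‖) := by
        gcongr
        norm_num
    _ = _ := by ring

end Operators

section SparseAndBlockNets

open Module

variable {s q : ℕ}

/-- The partition of the `m` coordinates into consecutive blocks of length `q`. -/
def block (m q : ℕ) (k : Fin m) : Fin (m / q + 1) :=
  ⟨k / q, Nat.lt_succ_of_le (Nat.div_le_div_right k.2.le)⟩

lemma card_block_eq_le (hq : 0 < q) (j : Fin (m / q + 1)) :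
    (Finset.univ.filter fun k => block m q k = j).card ≤ q := by
  refine (Finset.card_le_card_of_injOn (fun k => k.val % q) (t := Finset.range q)
    (fun k _ => by simpa using Nat.mod_lt _ hq) fun k hk k' hk' h => ?_).trans_eq
    (Finset.card_range q)
  simp only [block, Finset.coe_filter, Finset.mem_univ, true_and, Set.mem_ofPred_eq, Fin.ext_iff]
    at hk hk' h
  rw [Fin.ext_iff, ← Nat.div_add_mod k.val q, ← Nat.div_add_mod k'.val q, hk, hk', h]

lemma exists_sparseBlockNet (hsm : s ≤ m) (hsq : s ≤ q) (hq : 0 < q) :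
    ∃ N : Finset (EuclideanSpace ℝ (Fin m)),
      (N.card : ℝ) ≤ (m ^ s + (m / q + 1 : ℕ)) * 17 ^ q ∧ (∀ c ∈ N, ‖c‖ ≤ 1) ∧
      (∀ v : Fin m → ℝ, l0 v ≤ s → ∃ V, IsUnitBallNet (1 / 8) N V ∧ WithLp.toLp 2 v ∈ V) ∧
      ∀ j, IsUnitBallNet (1 / 8) N (coordSubspace {k | block m q k = j}) := by
  let I : Finset (Finset (Fin m)) := Finset.powersetCard s Finset.univ ∪
    Finset.univ.image fun j => Finset.univ.filter fun k => block m q k = j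
  have hrank (S) (hS : S ∈ I) : finrank ℝ (coordSubspace S) ≤ q := by
    refine (finrank_coordSubspace_le S).trans ?_
    obtain hS | hS := Finset.mem_union.1 hS
    · exact (Finset.mem_powersetCard_univ.1 hS).trans_le hsq
    · obtain ⟨j, -, rfl⟩ := Finset.mem_image.1 hS
      exact card_block_eq_le hq j
  have hI : (I.card : ℝ) ≤ m ^ s + (m / q + 1 : ℕ) := by
    have hsparse : (Finset.powersetCard s (Finset.univ : Finset (Fin m))).card ≤ m ^ s := by
      simpa using Nat.choose_le_pow m s
    have hblock := Finset.card_image_le (s := Finset.univ)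
      (f := fun j => Finset.univ.filter fun k => block m q k = j)
    rw [Finset.card_univ, Fintype.card_fin] at hblock
    exact_mod_cast (Finset.card_union_le _ _).trans (add_le_add hsparse hblock)
  obtain ⟨N, hcard, hN1, hN⟩ :=
    exists_forall_isUnitBallNet (show (0 : NNReal) < 1 / 8 by norm_num) I _ hrank
  refine ⟨N, hcard.trans ?_, hN1, fun v hv => ?_, fun j =>
    hN _ (Finset.mem_union_right _ (Finset.mem_image_of_mem _ (Finset.mem_univ j)))⟩
  · rw [show (1 + 2 / (1 / 8 : NNReal) : ℝ) = 17 by norm_num]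
    gcongr
  · obtain ⟨S, hvS, hS⟩ := Finset.exists_superset_card_eq hv (by simpa using hsm)
    refine ⟨_, hN S (Finset.mem_union_left _ (Finset.mem_powersetCard_univ.2 hS)),
      mem_coordSubspace fun k hk => ?_⟩
    by_contra hvk
    exact hk (hvS (by simpa using hvk))

end SparseAndBlockNets

/-! ### Spectral bounds from a net of exponential size -/

section Scale

variable {t : ℝ}

/-- The conclusions (a), (b), (c) of the theorem for a single intermediate product `M`. -/
def HasSpectralBounds (C : ℝ) (L : ℕ) (M : Fin m → Fin m → ℝ) : Prop :=
  spec M ≤ C * √L ∧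
  (∀ v : Fin m → ℝ, (l0 v : ℝ) ≤ m / (C * L * Real.log m) → l2 (mulVec M v) ≤ 2 * l2 v) ∧
  ∀ u : Fin m → ℝ, (l0 u : ℝ) ≤ m / (C * L * Real.log m) → l2 (mulVec (transpose M) u) ≤ C * l2 u

/-- The finitely many bounds on `M` from which `HasSpectralBounds` is deduced when `N` is a suitable
net: each of them is violated with exponentially small probability. -/
structure BoundedOnNet (N : Finset (EuclideanSpace ℝ (Fin m))) (L : ℕ) (M : Fin m → Fin m → ℝ) :
    Prop where
  l2_sq_le : ∀ c ∈ N, l2 (mulVec M c.ofLp) ^ 2 ≤ 3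
  dot_sq_le : ∀ c ∈ N, ∀ c' ∈ N, dot c.ofLp (mulVec M c'.ofLp) ^ 2 ≤ 1 / L

lemma three_fifths_le_of_log_two_le (ht : Real.log 2 ≤ t) : 3 / 5 ≤ t := by
  linarith [Real.log_two_gt_d9]

lemma seventeen_le_exp_three : (17 : ℝ) ≤ Real.exp 3 :=
  calc (17 : ℝ) ≤ 2.7 ^ 3 := by norm_num
    _ ≤ Real.exp 1 ^ 3 := by
        gcongr
        linarith [Real.exp_one_gt_d9]
    _ = Real.exp 3 := by
        rw [← Real.exp_nat_mul]
        norm_num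

lemma card_blocks_le (ht : Real.log 2 ≤ t) (hL : 0 < L) (hm : (m : ℝ) = 10 ^ 6 * t * L) :
    ((m / ⌊50 * t⌋₊ + 1 : ℕ) : ℝ) ≤ 40001 * L := by
  have ht' := three_fifths_le_of_log_two_le ht
  have hL' : (1 : ℝ) ≤ L := mod_cast hL
  have hq : 25 * t ≤ ⌊50 * t⌋₊ := by linarith [Nat.lt_floor_add_one (50 * t)]
  have hdiv : (m : ℝ) / ⌊50 * t⌋₊ ≤ 40000 * L := by
    rw [div_le_iff₀ (by linarith), hm]
    nlinarith
  push_cast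
  linarith [Nat.cast_div_le (α := ℝ) (m := m) (n := ⌊50 * t⌋₊)]

lemma sparseBlockNet_card_le {P J : ℝ} {q : ℕ} (ht : Real.log 2 ≤ t) (hL : L ≤ Real.exp t)
    (hP : P ≤ Real.exp t) (hJ : J ≤ 40001 * L) (hq : q ≤ 50 * t) :
    (P + J) * 17 ^ q ≤ Real.exp (167 * t) := by
  have hsum : P + J ≤ 40002 * Real.exp t := by linarith
  have hconst : (40002 : ℝ) ≤ Real.exp (16 * t) :=
    calc (40002 : ℝ) ≤ 2 ^ 16 := by norm_num
      _ ≤ Real.exp t ^ 16 := by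
          gcongr
          exact (Real.log_le_iff_le_exp two_pos).1 ht
      _ = Real.exp (16 * t) := by
          rw [← Real.exp_nat_mul]
          norm_num
  have hpow : (17 : ℝ) ^ q ≤ Real.exp (150 * t) :=
    calc (17 : ℝ) ^ q ≤ Real.exp 3 ^ q := by
          gcongr
          exact seventeen_le_exp_three
      _ = Real.exp (q * 3) := (Real.exp_nat_mul 3 q).symm
      _ ≤ Real.exp (150 * t) := Real.exp_le_exp.2 (by linarith)
  calc (P + J) * 17 ^ q ≤ 40002 * Real.exp t * 17 ^ q := by gcongr
    _ ≤ Real.exp (16 * t) * Real.exp t * Real.exp (150 * t) := by gcongr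
    _ = Real.exp (167 * t) := by
        rw [← Real.exp_add, ← Real.exp_add]
        ring_nf

lemma floor_mul_log_le (hL : 0 < L) (hm : (m : ℝ) = 10 ^ 6 * t * L) (hm1 : 1 < (m : ℝ)) :
    ⌊(m : ℝ) / (10 ^ 6 * L * Real.log m)⌋₊ * Real.log m ≤ t := by
  have := Real.log_pos hm1
  have : (0 : ℝ) < L := mod_cast hL
  calc ⌊(m : ℝ) / (10 ^ 6 * L * Real.log m)⌋₊ * Real.log m
      ≤ m / (10 ^ 6 * L * Real.log m) * Real.log m := by
        gcongr
        exact Nat.floor_le (by positivity)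
    _ = m / (10 ^ 6 * L) := by field_simp
    _ = t := by
        rw [hm]
        field_simp

lemma BoundedOnNet.hasSpectralBounds {N : Finset (EuclideanSpace ℝ (Fin m))} {s : ℕ}
    (hs : s = ⌊(m : ℝ) / (10 ^ 6 * L * Real.log m)⌋₊) (hL : 0 < L)
    (hsparse : ∀ v : Fin m → ℝ, l0 v ≤ s → ∃ V, IsUnitBallNet (1 / 8) N V ∧ WithLp.toLp 2 v ∈ V)
    {J : ℕ} (hJ : (J : ℝ) ≤ 40001 * L) {b : Fin m → Fin J}
    (hblock : ∀ j, IsUnitBallNet (1 / 8) N (coordSubspace {k | b k = j}))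
    {M : Fin m → Fin m → ℝ} (hM : BoundedOnNet N L M) : HasSpectralBounds (10 ^ 6) L M := by
  have hL' : (0 : ℝ) < √L := Real.sqrt_pos.2 (mod_cast hL)
  have hJL : 2 * √(Fintype.card (Fin J)) ≤ 10 ^ 6 * √L := by
    rw [Fintype.card_fin]
    have : √J ≤ 201 * √L := by
      refine Real.sqrt_le_iff.2 ⟨by positivity, hJ.trans ?_⟩
      rw [mul_pow, Real.sq_sqrt (Nat.cast_nonneg L)]
      gcongr
      norm_num
    linarith
  refine ⟨(spec_le_of_blockNets hblock hM.l2_sq_le).trans hJL, fun v hv => ?_, fun u hu => ?_⟩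
  · obtain ⟨V, hV, hvV⟩ := hsparse v (hs ▸ Nat.le_floor hv)
    exact l2_mulVec_le_of_net hV hM.l2_sq_le hvV
  · obtain ⟨V, hV, huV⟩ := hsparse u (hs ▸ Nat.le_floor hu)
    have hρ : (1 / √L) ^ 2 = 1 / (L : ℝ) := by
      rw [div_pow, one_pow, Real.sq_sqrt (Nat.cast_nonneg L)]
    refine (l2_transpose_mulVec_le_of_blockNets hblock hV (ρ := 1 / √L) (by positivity)
      (by simpa only [hρ] using hM.dot_sq_le) huV).trans
      (mul_le_mul_of_nonneg_right ?_ (l2_nonneg u))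
    calc 2 * (1 / √L) * √(Fintype.card (Fin J)) = 2 * √(Fintype.card (Fin J)) / √L := by ring
      _ ≤ 10 ^ 6 := (div_le_iff₀ hL').2 hJL

lemma exists_net_forall_hasSpectralBounds (ht : Real.log 2 ≤ t) (hL : 0 < L)
    (hLt : L ≤ Real.exp t) (hm : (m : ℝ) = 10 ^ 6 * t * L) :
    ∃ N : Finset (EuclideanSpace ℝ (Fin m)), (N.card : ℝ) ≤ Real.exp (167 * t) ∧
      (∀ c ∈ N, ‖c‖ ≤ 1) ∧ ∀ M, BoundedOnNet N L M → HasSpectralBounds (10 ^ 6) L M := by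
  have ht' := three_fifths_le_of_log_two_le ht
  have hL' : (1 : ℝ) ≤ L := mod_cast hL
  have hmt : 10 ^ 6 * t ≤ m := hm ▸ le_mul_of_one_le_right (by positivity) hL'
  have hlogm : 1 ≤ Real.log m := by
    rw [Real.le_log_iff_exp_le (by linarith)]
    linarith [Real.exp_one_lt_d9]
  set s := ⌊(m : ℝ) / (10 ^ 6 * L * Real.log m)⌋₊ with hs
  have hslog : s * Real.log m ≤ t := floor_mul_log_le hL hm (by linarith)
  have hst : (s : ℝ) ≤ t := (le_mul_of_one_le_right (Nat.cast_nonneg s) hlogm).trans hslog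
  have hpow : (m : ℝ) ^ s ≤ Real.exp t := by
    rwa [← Real.log_le_iff_le_exp (pow_pos (by linarith) s), Real.log_pow]
  have hsm : s ≤ m := by
    have : (s : ℝ) ≤ m := by linarith
    exact_mod_cast this
  obtain ⟨N, hcard, hN1, hsparse, hblock⟩ := exists_sparseBlockNet (q := ⌊50 * t⌋₊) hsm
    (Nat.le_floor (by linarith)) (Nat.floor_pos.2 (by linarith))
  have hJ := card_blocks_le ht hL hm
  exact ⟨N, hcard.trans (sparseBlockNet_card_le ht hLt hpow hJ (Nat.floor_le (by positivity))), hN1,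
    fun M hM => hM.hasSpectralBounds hs hL hsparse hJ hblock⟩

end Scale

/-! ### The union bound -/

section UnionBound

variable {κ : ℕ}

lemma two_inv_pow_le_ofReal_exp (hL : 0 < L) (hκ : 60 * κ * L ≤ m) :
    (2⁻¹ : ENNReal) ^ m ≤ ENNReal.ofReal (Real.exp (-(κ / 8))) := by
  have hκm : κ ≤ m := by nlinarith
  have hreal : (2⁻¹ : ℝ) ^ m ≤ Real.exp (-(κ / 8)) :=
    calc (2⁻¹ : ℝ) ^ m ≤ 2⁻¹ ^ κ := pow_le_pow_of_le_one (by norm_num) (by norm_num) hκm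
      _ ≤ (2 / 3) ^ κ := by
          gcongr
          norm_num
      _ ≤ Real.exp (-(κ / 3)) := two_thirds_pow_le_exp κ
      _ ≤ Real.exp (-(κ / 8)) := by
          gcongr
          norm_num
  refine le_of_eq_of_le ?_ (ENNReal.ofReal_le_ofReal hreal)
  rw [ENNReal.ofReal_pow (by norm_num), ENNReal.ofReal_inv_of_pos two_pos, ENNReal.ofReal_ofNat]

section Measure

variable {Ω : Type*} [MeasurableSpace Ω] (μ : Measure Ω) {ε : ENNReal}

lemma measure_exists_mem_le {ι : Type*} (I : Finset ι) {B : ι → Ω → Prop}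
    (h : ∀ i ∈ I, μ {z | B i z} ≤ ε) : μ {z | ∃ i ∈ I, B i z} ≤ I.card * ε :=
  calc μ {z | ∃ i ∈ I, B i z} = μ (⋃ i ∈ I, {z | B i z}) := by
        congr 1
        ext z
        simp only [Set.mem_ofPred_eq, Set.mem_iUnion, exists_prop]
    _ ≤ ∑ i ∈ I, μ {z | B i z} := measure_biUnion_finset_le I _
    _ ≤ I.card * ε := (Finset.sum_le_card_nsmul I _ ε h).trans_eq (nsmul_eq_mul _ _)

lemma measure_exists_fin_le {n : ℕ} {B : Fin n → Ω → Prop} (h : ∀ i, μ {z | B i z} ≤ ε) :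
    μ {z | ∃ i, B i z} ≤ n * ε := by
  simpa using measure_exists_mem_le μ Finset.univ fun i _ => h i

lemma ofReal_one_sub_le_measure [IsProbabilityMeasure μ] {S : Set Ω} {r : ℝ} (hr : 0 ≤ r)
    (h : μ Sᶜ ≤ ENNReal.ofReal r) : ENNReal.ofReal (1 - r) ≤ μ S := by
  rw [ENNReal.ofReal_sub _ hr, ENNReal.ofReal_one, tsub_le_iff_right]
  calc 1 = μ (S ∪ Sᶜ) := by rw [Set.union_compl_self, measure_univ]
    _ ≤ μ S + ENNReal.ofReal r := (measure_union_le S Sᶜ).trans (by gcongr)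

end Measure

lemma initAW_not_boundedOnNet_le (hL : 0 < L) (hm : 0 < m) (hκ0 : 0 < κ) (hκ : 60 * κ * L ≤ m)
    {x : Fin 𝔡 → ℝ} (hx : x ≠ 0) {N : Finset (EuclideanSpace ℝ (Fin m))}
    (hN : ∀ c ∈ N, ‖c‖ ≤ 1) :
    initAW 𝔡 m L {z | ¬ ∀ a k : Fin L, BoundedOnNet N L (midProd z x (a + 1) k)}
      ≤ (L + 1 + L * (L * N.card) + L * (L * (N.card * N.card)) : ℕ)
        * ENNReal.ofReal (Real.exp (-(κ / 8))) := by
  have hl2 (c) (hc : c ∈ N) : l2 c.ofLp ≤ 1 := by simpa only [l2_eq_norm] using hN c hc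
  set ε := ENNReal.ofReal (Real.exp (-(κ / 8)))
  have hsub : {z : Weights 𝔡 m L | ¬ ∀ a k : Fin L, BoundedOnNet N L (midProd z x (a + 1) k)} ⊆
      {z | hseq z.1 z.2 x L = 0} ∪
      {z | ∃ a k : Fin L, ∃ c ∈ N, hseq z.1 z.2 x k ≠ 0 ∧
        3 < l2 (mulVec (midProd z x (a + 1) k) c.ofLp) ^ 2} ∪
      {z | ∃ a k : Fin L, ∃ c ∈ N, ∃ c' ∈ N, hseq z.1 z.2 x k ≠ 0 ∧
        1 / (L : ℝ) < dot c.ofLp (mulVec (midProd z x (a + 1) k) c'.ofLp) ^ 2} := by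
    intro z hz
    by_contra! h
    simp only [Set.mem_union, Set.mem_ofPred_eq, not_or, not_exists, not_and, not_lt] at h
    obtain ⟨⟨hx, hnorm⟩, hdot⟩ := h
    have hne (k : Fin L) : hseq z.1 z.2 x k ≠ 0 := hseq_ne_zero_of_le z.1 z.2 x k.2.le hx
    exact hz fun a k => ⟨fun c hc => hnorm a k c hc (hne k),
      fun c hc c' hc' => hdot a k c hc c' hc' (hne k)⟩
  have hzero : initAW 𝔡 m L {z | hseq z.1 z.2 x L = 0} ≤ (L + 1) * ε :=
    (initAW_hseq_eq_zero_le hm hx le_rfl).trans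
      (mul_le_mul_right (two_inv_pow_le_ofReal_exp hL hκ) _)
  have hnorm := measure_exists_fin_le (initAW 𝔡 m L) fun a : Fin L =>
    measure_exists_fin_le _ fun k : Fin L => measure_exists_mem_le _ N fun c hc =>
      initAW_three_lt_l2_midProd_sq_le x c.ofLp (a + 1) hκ (hl2 c hc) k
  have hdot := measure_exists_fin_le (initAW 𝔡 m L) fun a : Fin L =>
    measure_exists_fin_le _ fun k : Fin L => measure_exists_mem_le _ N fun c hc =>
      measure_exists_mem_le _ N fun c' hc' =>
        initAW_lt_dot_midProd_sq_le x c'.ofLp (a + 1) hm hκ0 hκ (hl2 c' hc') (hl2 c hc) k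
  refine (measure_mono hsub).trans ((measure_union_le _ _).trans (add_le_add
    ((measure_union_le _ _).trans (add_le_add hzero hnorm)) hdot) |>.trans_eq ?_)
  push_cast
  ring

end UnionBound

section Exponents

variable {n : ℕ} {t : ℝ}

lemma union_count_le {n L N : ℝ} (hn : 1 ≤ n) (hL : 1 ≤ L) (ht : Real.log 2 ≤ t)
    (hnL : n * L ≤ Real.exp t) (hN0 : 0 ≤ N) (hN : N ≤ Real.exp (167 * t)) :
    n * (L + 1 + L * (L * N) + L * (L * (N * N))) ≤ Real.exp (338 * t) := by
  set K := Real.exp (167 * t)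
  have hK : 1 ≤ K := Real.one_le_exp (by linarith [three_fifths_le_of_log_two_le ht])
  have hLK : L ≤ L * (L * (K * K)) := le_mul_of_one_le_right (by linarith) (by nlinarith)
  have hLLK : L * (L * K) ≤ L * (L * (K * K)) := by
    gcongr
    exact le_mul_of_one_le_right (by linarith) hK
  have h2 : 2 ≤ Real.exp t := (Real.log_le_iff_le_exp two_pos).1 ht
  calc n * (L + 1 + L * (L * N) + L * (L * (N * N)))
      ≤ n * (L + 1 + L * (L * K) + L * (L * (K * K))) := by gcongr
    _ ≤ n * (4 * (L * (L * (K * K)))) := by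
        gcongr
        linarith
    _ ≤ n * n * (4 * (L * (L * (K * K)))) := by
        gcongr
        exact le_mul_of_one_le_left (by linarith) hn
    _ = 2 ^ 2 * (n * L) ^ 2 * K ^ 2 := by ring
    _ ≤ Real.exp t ^ 2 * Real.exp t ^ 2 * K ^ 2 := by gcongr
    _ = Real.exp (338 * t) := by
        simp only [K, ← Real.exp_nat_mul, ← Real.exp_add]
        congr 1
        push_cast
        ring

lemma exists_moment_order (ht : Real.log 2 ≤ t) (hm : (m : ℝ) = 10 ^ 6 * t * L) :
    ∃ κ : ℕ, 0 < κ ∧ 60 * κ * L ≤ m ∧ 339 * t ≤ κ / 8 := by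
  have ht' := three_fifths_le_of_log_two_le ht
  have hle : (⌊10 ^ 6 * t / 60⌋₊ : ℝ) ≤ 10 ^ 6 * t / 60 := Nat.floor_le (by positivity)
  have hlt := Nat.lt_floor_add_one (10 ^ 6 * t / 60)
  refine ⟨⌊10 ^ 6 * t / 60⌋₊, Nat.floor_pos.2 (by linarith), ?_, by linarith⟩
  have : (60 * ⌊10 ^ 6 * t / 60⌋₊ * L : ℝ) ≤ m := by
    rw [hm]
    exact mul_le_mul_of_nonneg_right (by linarith) (Nat.cast_nonneg L)
  exact_mod_cast this

lemma initAW_exists_not_boundedOnNet_le {x : Fin n → Fin 𝔡 → ℝ} (hx : ∀ i, x i ≠ 0) (hn : 0 < n)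
    (hL : 0 < L) (ht : Real.log 2 ≤ t) (hm : (m : ℝ) = 10 ^ 6 * t * L) (hnL : n * L ≤ Real.exp t)
    {N : Finset (EuclideanSpace ℝ (Fin m))} (hN : ∀ c ∈ N, ‖c‖ ≤ 1)
    (hcard : (N.card : ℝ) ≤ Real.exp (167 * t)) :
    initAW 𝔡 m L {z | ∃ i, ¬ ∀ a k : Fin L, BoundedOnNet N L (midProd z (x i) (a + 1) k)}
      ≤ ENNReal.ofReal (Real.exp (-t)) := by
  obtain ⟨κ, hκ0, hκ, hκt⟩ := exists_moment_order ht hm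
  have hm0 : 0 < m := by
    have : 0 < 60 * κ * L := by positivity
    omega
  refine (measure_exists_fin_le _ fun i =>
    initAW_not_boundedOnNet_le hL hm0 hκ0 hκ (hx i) hN).trans ?_
  rw [← mul_assoc, ← Nat.cast_mul, ← ENNReal.ofReal_natCast, ← ENNReal.ofReal_mul (by positivity)]
  refine ENNReal.ofReal_le_ofReal ?_
  push_cast
  calc (n * (L + 1 + L * (L * N.card) + L * (L * (N.card * N.card))) : ℝ) * Real.exp (-(κ / 8))
      ≤ Real.exp (338 * t) * Real.exp (-(339 * t)) := by
        gcongr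
        exact union_count_le (mod_cast hn) (mod_cast hL) ht hnL (Nat.cast_nonneg _) hcard
    _ = Real.exp (-t) := by
        rw [← Real.exp_add]
        ring_nf

end Exponents

theorem statement6_general :
    ∃ C c : ℝ, 0 < C ∧ 0 < c ∧
      ∀ (𝔡 m L n : ℕ) (x : Fin n → Fin 𝔡 → ℝ), 2 ≤ n * L → (∀ i, x i ≠ 0) →
        C * (L : ℝ) * Real.log ((n : ℝ) * (L : ℝ)) ≤ (m : ℝ) →
        ENNReal.ofReal (1 - Real.exp (-(c * (m : ℝ) / (L : ℝ)))) ≤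
          initAW 𝔡 m L
            {z | ∀ (i : Fin n) (a b : ℕ), 1 ≤ a → a ≤ b → b ≤ L →
              HasSpectralBounds C L (mmul (Wat z.2 b) (prodDW z.1 z.2 (x i) a (b - 1)))} := by
  refine ⟨10 ^ 6, 1 / 10 ^ 6, by norm_num, by norm_num, fun 𝔡 m L n x hnL hx hmC => ?_⟩
  have hn : 0 < n := Nat.pos_of_ne_zero fun h => by simp [h] at hnL
  have hL : 0 < L := Nat.pos_of_ne_zero fun h => by simp [h] at hnL
  have hL' : (0 : ℝ) < L := mod_cast hL
  have hnL' : (2 : ℝ) ≤ n * L := mod_cast hnL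
  obtain ⟨t, hm⟩ : ∃ t : ℝ, (m : ℝ) = 10 ^ 6 * t * L := ⟨m / (10 ^ 6 * L), by field_simp⟩
  have hlog : Real.log (n * L) ≤ t := by
    refine le_of_mul_le_mul_left (hmC.trans_eq (hm.trans ?_)) (by positivity : 0 < 10 ^ 6 * (L : ℝ))
    ring
  have ht : Real.log 2 ≤ t := (Real.log_le_log two_pos hnL').trans hlog
  have hexp : n * L ≤ Real.exp t := (Real.log_le_iff_le_exp (by linarith)).1 hlog
  have hLexp : L ≤ Real.exp t := (le_mul_of_one_le_left hL'.le (mod_cast hn)).trans hexp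
  obtain ⟨N, hcard, hN, hbounds⟩ := exists_net_forall_hasSpectralBounds ht hL hLexp hm
  rw [show 1 / 10 ^ 6 * (m : ℝ) / L = t by rw [hm]; field_simp]
  have hbad := (measure_mono fun _ => not_forall.1).trans
    (initAW_exists_not_boundedOnNet_le hx hn hL ht hm hexp hN hcard)
  refine (ofReal_one_sub_le_measure _ (Real.exp_pos _).le hbad).trans (measure_mono ?_)
  intro z hz i a b ha hab hbL
  obtain ⟨a, rfl⟩ := Nat.exists_eq_add_of_le' ha
  obtain ⟨k, rfl⟩ := Nat.exists_eq_add_of_le' (ha.trans hab)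
  exact hbounds _ (hz i ⟨a, by omega⟩ ⟨k, by omega⟩)

/-- Lemma 7.2 a–c, intermediate-layer spectral bounds at initialization. -/
theorem statement6 :
    ∃ C c : ℝ, 0 < C ∧ 0 < c ∧
      ∀ (𝔡 m L n : ℕ) (h𝔡 : 0 < 𝔡) (hL : 2 ≤ L) (hm : 0 < m) (hn : 0 < n)
        (x : Fin n → Fin 𝔡 → ℝ), (∀ i, l2 (x i) = 1) →
        C * (n : ℝ) * (L : ℝ) * Real.log ((n : ℝ) * (L : ℝ)) ≤ (m : ℝ) →
        ENNReal.ofReal (1 - Real.exp (-(c * (m : ℝ) / (L : ℝ)))) ≤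
          initAW 𝔡 m L
            {z | ∀ (i : Fin n) (a b : ℕ), 1 ≤ a → a ≤ b → b ≤ L →
              spec (mmul (Wat z.2 b) (prodDW z.1 z.2 (x i) a (b - 1))) ≤
                  C * Real.sqrt L ∧
              (∀ v : Fin m → ℝ, (l0 v : ℝ) ≤ (m : ℝ) / (C * (L : ℝ) * Real.log m) →
                l2 (mulVec (mmul (Wat z.2 b) (prodDW z.1 z.2 (x i) a (b - 1))) v) ≤
                  2 * l2 v) ∧
              (∀ u : Fin m → ℝ, (l0 u : ℝ) ≤ (m : ℝ) / (C * (L : ℝ) * Real.log m) →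
                l2 (mulVec (transpose (mmul (Wat z.2 b) (prodDW z.1 z.2 (x i) a (b - 1)))) u) ≤
                  C * l2 u)} := by
  obtain ⟨C, c, hC, hc, h⟩ := statement6_general
  refine ⟨C, c, hC, hc, fun 𝔡 m L n _ hL _ hn x hx hm => h 𝔡 m L n x (by nlinarith) (fun i h0 => ?_)
    (le_trans ?_ hm)⟩
  · exact zero_ne_one ((h0 ▸ l2_zero).symm.trans (hx i))
  · have hlog : 0 ≤ Real.log (n * L) := mod_cast Real.log_natCast_nonneg (n * L)
    have hCn : C ≤ C * n := le_mul_of_one_le_right hC.le (mod_cast hn)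
    gcongr

end DNNPaper
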